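/- Let F be a field of characteristic 2 and K a purely inseparable extension of F of exponent 1 (K² ⊆ F). Let n ≥ 1, let B = ⟨⟨a₁,…,aₙ⟩⟩_b with aᵢ ∈ F* be an n-fold bilinear Pfister form over F with associated totally singular quadratic form q = ⟨⟨a₁,…,aₙ⟩⟩ : x ↦ B(x,x), and choose k ≤ n and indices 1 ≤ i₁ < … < i_k ≤ n such that (q_K)_an ≅ (⟨⟨a_{i₁},…,a_{i_k}⟩⟩)_K; put B₀ = ⟨⟨a_{i₁},…,a_{i_k}⟩⟩_b. Let L = K(B) be the function field over K of the quadric q = 0. If dim B₀ = 1 then W_q(L/F) = W_q(K/F); if dim B₀ > 1 then W_q(L/F) = W_q(K/F) + B₀ ⊗ W_q(F). -/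

import Mathlib

/-!  A concrete coefficient-matrix model of (possibly singular) finite-dimensional
quadratic forms over a field, suitable for characteristic 2. -/

/-- Coefficient representation of a (finite-dimensional) quadratic form over a field `F`:
the form of dimension `dim` given by `q(x) = ∑ i j, c i j * x i * x j`. -/
structure QF (F : Type*) [Field F] : Type _ where
  dim : ℕ
  c : Matrix (Fin dim) (Fin dim) F

namespace QF

variable {F E : Type*} [Field F] [Field E]

/-- Evaluation of the quadratic form at a vector. -/
def eval (q : QF F) (x : Fin q.dim → F) : F :=
  ∑ i, ∑ j, q.c i j * x i * x j

/-- Scalar extension (base change) of a quadratic form along a ring homomorphism. -/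
def map (f : F →+* E) (q : QF F) : QF E :=
  ⟨q.dim, fun i j => f (q.c i j)⟩

/-- Orthogonal sum. -/
def orthSum (q q' : QF F) : QF F :=
  ⟨q.dim + q'.dim,
    Matrix.reindex finSumFinEquiv finSumFinEquiv (Matrix.fromBlocks q.c 0 0 q'.c)⟩

/-- Scaling `a • q`. -/
def smul (a : F) (q : QF F) : QF F := ⟨q.dim, a • q.c⟩

/-- The nonsingular binary quadratic form `[a,b] : (x,y) ↦ ax² + xy + by²`. -/
def bin (a b : F) : QF F := ⟨2, !![a, 1; 0, b]⟩

/-- The diagonal (totally singular) quadratic form `⟨a₁, …, aₙ⟩`. -/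
def diag {n : ℕ} (v : Fin n → F) : QF F := ⟨n, Matrix.diagonal v⟩

/-- The zero-dimensional quadratic form. -/
def nil : QF F := { dim := 0, c := 0 }

/-- The one-dimensional form `⟨1⟩`. -/
def unit : QF F := diag (fun _ : Fin 1 => (1 : F))

/-- Orthogonal sum of a list of forms. -/
def sumList (l : List (QF F)) : QF F := l.foldr orthSum nil

/-- `pfTensor [a₁,…,aₙ] q` is the tensor product `⟨⟨a₁,…,aₙ⟩⟩_b ⊗ q` of the bilinear
Pfister form `⟨⟨a₁,…,aₙ⟩⟩_b = ⟨1,a₁⟩_b ⊗ ⋯ ⊗ ⟨1,aₙ⟩_b` with the quadratic form `q`,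
via `⟨1,a⟩_b ⊗ q ≅ q ⊥ a·q`. -/
def pfTensor (l : List F) (q : QF F) : QF F :=
  l.foldr (fun a r => orthSum r (smul a r)) q

/-- The hyperbolic plane `ℍ ≅ [0,0]`. -/
def hypPlane : QF F := bin 0 0

/-- The orthogonal sum of `k` hyperbolic planes. -/
def hyp (k : ℕ) : QF F := sumList (List.replicate k hypPlane)

/-- The `l`-dimensional zero form `⟨0,…,0⟩`. -/
def zeros (l : ℕ) : QF F := diag (fun _ : Fin l => (0 : F))

/-- Isometry of quadratic forms. -/
def Isometric (q q' : QF F) : Prop :=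
  ∃ e : (Fin q.dim → F) ≃ₗ[F] (Fin q'.dim → F), ∀ x, q'.eval (e x) = q.eval x

/-- Anisotropy: the form has no nontrivial zero. -/
def Anisotropic (q : QF F) : Prop := ∀ x, q.eval x = 0 → x = 0

/-- A quadratic form is nonsingular if the radical of its polar form
`B_q(x,y) = q(x+y) - q(x) - q(y)` (with matrix `c + cᵀ`) is trivial. -/
def Nonsingular (q : QF F) : Prop := ∀ x, (q.c + q.c.transpose).mulVec x = 0 → x = 0

/-- A quadratic form is totally singular if its polar form vanishes identically. -/
def TotallySingular (q : QF F) : Prop := q.c + q.c.transpose = 0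

/-- A quadratic form is hyperbolic if it is isometric to an orthogonal sum of
hyperbolic planes. -/
def Hyperbolic (q : QF F) : Prop := ∃ k, Isometric q (hyp k)

/-- Witt equivalence: `q ~ q'` iff the anisotropic parts agree, equivalently the two
forms become isometric after adding suitable numbers of hyperbolic planes and zero
forms. -/
def WittEquiv (q q' : QF F) : Prop :=
  ∃ k k' l l', Isometric (orthSum q (orthSum (hyp k) (zeros l)))
    (orthSum q' (orthSum (hyp k') (zeros l')))

/-- `AnisoPartOf φ q` : `φ` is (isometric to) the anisotropic part of `q`, i.e. `φ` is
anisotropic and `q ≅ k × ℍ ⊥ φ ⊥ ⟨0,…,0⟩`. -/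
def AnisoPartOf (φ q : QF F) : Prop :=
  Anisotropic φ ∧ ∃ k l, Isometric q (orthSum (hyp k) (orthSum φ (zeros l)))

/-- `Dominates q' q` means `q ≺ q'`, i.e. `q'` dominates `q`: there is an injective
linear map `t` of the underlying spaces with `q' ∘ t = q`. -/
def Dominates (q' q : QF F) : Prop :=
  ∃ t : (Fin q.dim → F) →ₗ[F] (Fin q'.dim → F), Function.Injective t ∧
    ∀ x, q'.eval (t x) = q.eval x

/-- The affine quadric polynomial `∑ cᵢⱼ XᵢXⱼ` of a quadratic form. -/
noncomputable def toPoly (q : QF F) : MvPolynomial (Fin q.dim) F :=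
  ∑ i, ∑ j, MvPolynomial.C (q.c i j) * (MvPolynomial.X i * MvPolynomial.X j)

/-- The affine coordinate ring of the (reduced) quadric `q = 0`. -/
abbrev CoordRing (q : QF F) : Type _ :=
  MvPolynomial (Fin q.dim) F ⧸ (Ideal.span {q.toPoly}).radical

/-- The function field of the quadric `q = 0` (assuming the quadric is integral). -/
abbrev FunctionField (q : QF F) [IsDomain (CoordRing q)] : Type _ :=
  FractionRing (CoordRing q)

/-- The canonical ring homomorphism from a base field `F` into the function field of a
quadric defined over an extension field `K` of `F`. -/
noncomputable def toFunctionField {K : Type*} [Field K] [Algebra F K] (q : QF K)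
    [IsDomain (CoordRing q)] : F →+* FunctionField q :=
  (algebraMap (CoordRing q) (FunctionField q)).comp
    ((algebraMap K (CoordRing q)).comp (algebraMap F K))

end QF

/-! Since `K² ⊆ F`, an isotropic subspace of the extension to `K` of a nonsingular form `ρ` over `F`
can be split off already over `F`, so `ρ` may be assumed anisotropic over `K`.

The quadric `q = 0` has a point over a quadratic extension of a purely transcendental extension of
`K`, obtained from a generic vector by adding a square root to one coordinate. If `ρ` is hyperbolic
over `L`, it is hyperbolic there, so over the transcendental extension `ρ` represents its value at
`e` times a generic value of `q`; the Cassels–Pfister subform argument then shows that `ρ_K`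
contains `ρ(e) B₀` (and that `ρ = 0` if `dim B₀ = 1`, when the quadratic extension is trivial).

For `dim B₀ = 2 ^ k` and a suitable `b`, the form `ρ ⊥ B₀ ⊗ [ρ(e), b]` has, over `K`, an isotropic
subspace of dimension `2 ^ k + 1`. It is thus Witt equivalent over `K` to a form of dimension
smaller than `dim ρ` that is again hyperbolic over `L`, and induction on the dimension concludes. -/

universe u

namespace QF

open QuadraticMap (polar polarBilin weightedSumSquares)
open Module (finrank)
open LinearMap.BilinForm (orthogonal)
open scoped Matrix

section Lagrangian

variable {k V V₁ V₂ V₃ : Type*} [Field k]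
  [AddCommGroup V] [Module k V] [AddCommGroup V₁] [Module k V₁]
  [AddCommGroup V₂] [Module k V₂] [AddCommGroup V₃] [Module k V₃]

/-- A quadratic form is nonsingular if its polar form has trivial radical; this is
`QF.Nonsingular` for quadratic forms on an abstract space. -/
def IsNonsingular (Q : QuadraticForm k V) : Prop := ∀ x, (∀ y, polar Q x y = 0) → x = 0

/-- `Q` has a totally isotropic subspace of at least half the dimension. In characteristic `2` the
Witt equivalence of nonsingular forms `Q₁` and `Q₂` is expressed by `HasLagrangian (Q₁.prod Q₂)`,
since there `-Q₂ = Q₂`. -/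
def HasLagrangian (Q : QuadraticForm k V) : Prop :=
  ∃ U : Submodule k V, (∀ u ∈ U, Q u = 0) ∧ finrank k V ≤ 2 * finrank k U

lemma polar_eq_zero_of_isotropic {Q : QuadraticForm k V} {U : Submodule k V}
    (hU : ∀ u ∈ U, Q u = 0) {x y : V} (hx : x ∈ U) (hy : y ∈ U) : polar Q x y = 0 := by
  simp [polar, hU _ (U.add_mem hx hy), hU _ hx, hU _ hy]

lemma polar_map_isometry {Q₁ : QuadraticForm k V₁} {Q₂ : QuadraticForm k V₂} {g : V₁ →ₗ[k] V₂}
    (hg : ∀ x, Q₂ (g x) = Q₁ x) (x y : V₁) : polar Q₂ (g x) (g y) = polar Q₁ x y := by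
  simp [polar, ← map_add, hg]

lemma finrank_le_finrank_map_add_finrank_inf_ker [FiniteDimensional k V] (g : V →ₗ[k] V₁)
    (U : Submodule k V) :
    finrank k U = finrank k (U.map g) + finrank k (U ⊓ LinearMap.ker g : Submodule k V) := by
  rw [← (g.domRestrict U).finrank_range_add_finrank_ker, LinearMap.range_domRestrict,
    LinearMap.ker_domRestrict, ← Submodule.map_comap_subtype, Submodule.finrank_map_subtype_eq]

lemma finrank_submodule_prod [FiniteDimensional k V₁] [FiniteDimensional k V₂]
    (U₁ : Submodule k V₁) (U₂ : Submodule k V₂) :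
    finrank k (U₁.prod U₂) = finrank k U₁ + finrank k U₂ := by
  have hrange : U₁.prod U₂ = LinearMap.range (U₁.subtype.prodMap U₂.subtype) := by
    rw [LinearMap.range_prodMap, U₁.range_subtype, U₂.range_subtype]
  rw [hrange, LinearMap.finrank_range_of_inj (Function.Injective.prodMap U₁.injective_subtype
    U₂.injective_subtype), Module.finrank_prod]

namespace IsNonsingular

variable {Q : QuadraticForm k V} {Q₁ : QuadraticForm k V₁} {Q₂ : QuadraticForm k V₂}

lemma nondegenerate (hQ : IsNonsingular Q) : (polarBilin Q).Nondegenerate :=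
  ⟨hQ, fun x hx => hQ x fun y => by rw [QuadraticMap.polar_comm]; exact hx y⟩

lemma of_equivalent (hQ : IsNonsingular Q₁) (h : Q₁.Equivalent Q₂) : IsNonsingular Q₂ := by
  obtain ⟨e⟩ := h
  intro x hx
  have key : e.symm x = 0 := hQ _ fun y => by
    rw [← polar_map_isometry (Q₂ := Q₂) (g := e.toLinearEquiv.toLinearMap) e.map_app]
    simpa using hx (e y)
  simpa using congrArg e key

lemma prod (h₁ : IsNonsingular Q₁) (h₂ : IsNonsingular Q₂) : IsNonsingular (Q₁.prod Q₂) :=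
  fun x h => Prod.ext (h₁ x.1 fun z => by simpa using h (z, 0))
    (h₂ x.2 fun z => by simpa using h (0, z))

lemma of_prod_right (h : IsNonsingular (Q₁.prod Q₂)) : IsNonsingular Q₂ := fun x hx => by
  simpa using h (0, x) fun y => by simp [hx]

lemma smul (hQ : IsNonsingular Q) {a : k} (ha : a ≠ 0) : IsNonsingular (a • Q) :=
  fun x hx => hQ x fun y => by simpa [QuadraticMap.polar_smul, ha] using hx y

lemma injective_of_isometry (hQ : IsNonsingular Q₁) {g : V₁ →ₗ[k] V₂}
    (hg : ∀ x, Q₂ (g x) = Q₁ x) : Function.Injective g := by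
  refine (injective_iff_map_eq_zero g).2 fun x hx => hQ x fun y => ?_
  rw [← polar_map_isometry hg, hx, QuadraticMap.polar_zero_left]

variable [FiniteDimensional k V]

lemma finrank_orthogonal (hQ : IsNonsingular Q) (U : Submodule k V) :
    finrank k (orthogonal (polarBilin Q) U) + finrank k U = finrank k V := by
  have := LinearMap.BilinForm.finrank_orthogonal hQ.nondegenerate U
  have := U.finrank_le
  omega

lemma two_mul_finrank_le (hQ : IsNonsingular Q) {U : Submodule k V} (hU : ∀ u ∈ U, Q u = 0) :
    2 * finrank k U ≤ finrank k V := by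
  have hle : U ≤ orthogonal (polarBilin Q) U := fun x hx y hy =>
    polar_eq_zero_of_isotropic hU hy hx
  have := Submodule.finrank_mono hle
  have := hQ.finrank_orthogonal U
  omega

lemma orthogonal_eq_of_lagrangian (hQ : IsNonsingular Q) {U : Submodule k V}
    (hU : ∀ u ∈ U, Q u = 0) (hdim : finrank k V ≤ 2 * finrank k U) :
    orthogonal (polarBilin Q) U = U := by
  have hle : U ≤ orthogonal (polarBilin Q) U := fun x hx y hy =>
    polar_eq_zero_of_isotropic hU hy hx
  have := hQ.finrank_orthogonal U
  exact (Submodule.eq_of_le_of_finrank_le hle (by omega)).symm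

lemma finrank_add_finrank_inf_le (hQ : IsNonsingular Q) {U : Submodule k V}
    (hU : ∀ u ∈ U, Q u = 0) (N : Submodule k V) :
    finrank k U + finrank k (U ⊓ N : Submodule k V) ≤
      finrank k (U ⊓ orthogonal (polarBilin Q) N : Submodule k V) + finrank k N := by
  have hrefl : (polarBilin Q).IsRefl := fun x y h => by
    rwa [QuadraticMap.polarBilin_apply_apply, QuadraticMap.polar_comm]
  have hUU : U ≤ orthogonal (polarBilin Q) U := fun x hx y hy =>
    polar_eq_zero_of_isotropic hU hy hx
  have hle : orthogonal (polarBilin Q) (orthogonal (polarBilin Q) U ⊔ N) ≤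
      U ⊓ orthogonal (polarBilin Q) N := le_inf
    ((LinearMap.BilinForm.orthogonal_le le_sup_left).trans_eq
      (LinearMap.BilinForm.orthogonal_orthogonal hQ.nondegenerate hrefl U))
    (LinearMap.BilinForm.orthogonal_le le_sup_right)
  have := Submodule.finrank_mono hle
  have := Submodule.finrank_mono (inf_le_inf_right N hUU)
  have := Submodule.finrank_sup_add_finrank_inf_eq (orthogonal (polarBilin Q) U) N
  have := hQ.finrank_orthogonal U
  have := hQ.finrank_orthogonal (orthogonal (polarBilin Q) U ⊔ N)
  omega

end IsNonsingular

namespace HasLagrangian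

variable {Q₁ : QuadraticForm k V₁} {Q₂ : QuadraticForm k V₂} {Q₃ : QuadraticForm k V₃}

lemma of_equivalent (h : HasLagrangian Q₁) (e : Q₁.Equivalent Q₂) : HasLagrangian Q₂ := by
  obtain ⟨U, hU, hdim⟩ := h
  obtain ⟨e⟩ := e
  refine ⟨U.map e.toLinearEquiv.toLinearMap, ?_, ?_⟩
  · rintro _ ⟨x, hx, rfl⟩
    exact (e.map_app x).trans (hU x hx)
  · rwa [LinearEquiv.finrank_map_eq e.toLinearEquiv U, ← e.toLinearEquiv.finrank_eq]

lemma prod_symm (h : HasLagrangian (Q₁.prod Q₂)) : HasLagrangian (Q₂.prod Q₁) :=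
  h.of_equivalent ⟨.prodComm Q₁ Q₂⟩

lemma smul (h : HasLagrangian Q₁) (a : k) : HasLagrangian (a • Q₁) := by
  obtain ⟨U, hU, hdim⟩ := h
  exact ⟨U, fun u hu => by simp [hU u hu], hdim⟩

variable [FiniteDimensional k V₁] [FiniteDimensional k V₂] [FiniteDimensional k V₃]

lemma prod (h₁ : HasLagrangian Q₁) (h₂ : HasLagrangian Q₂) : HasLagrangian (Q₁.prod Q₂) := by
  obtain ⟨U₁, hU₁, hdim₁⟩ := h₁
  obtain ⟨U₂, hU₂, hdim₂⟩ := h₂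
  refine ⟨U₁.prod U₂, fun u hu => by simp [hU₁ u.1 hu.1, hU₂ u.2 hu.2], ?_⟩
  rw [Module.finrank_prod, finrank_submodule_prod]
  omega

lemma prod_self [CharP k 2] (Q : QuadraticForm k V₁) : HasLagrangian (Q.prod Q) := by
  refine ⟨LinearMap.range (LinearMap.id.prod LinearMap.id), ?_, ?_⟩
  · rintro _ ⟨x, rfl⟩
    exact CharTwo.add_self_eq_zero (Q x)
  · rw [LinearMap.finrank_range_of_inj fun x y h => congrArg Prod.fst h, Module.finrank_prod,
      two_mul]

lemma cancel_right (h : HasLagrangian (Q₁.prod Q₂)) (h₂ : HasLagrangian Q₂)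
    (hQ₁ : IsNonsingular Q₁) (hQ₂ : IsNonsingular Q₂) : HasLagrangian Q₁ := by
  obtain ⟨U, hU, hdim⟩ := h
  obtain ⟨W, hW, hdimW⟩ := h₂
  set N : Submodule k (V₁ × V₂) := (⊥ : Submodule k V₁).prod W
  set U' := U ⊓ orthogonal (polarBilin (Q₁.prod Q₂)) N
  have hU' : ∀ u ∈ U', u.2 ∈ W := fun u hu => by
    rw [← hQ₂.orthogonal_eq_of_lagrangian hW hdimW]
    intro w hw
    simpa using hu.2 (0, w) ⟨rfl, hw⟩
  refine ⟨U'.map (LinearMap.fst k V₁ V₂), ?_, ?_⟩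
  · rintro _ ⟨u, hu, rfl⟩
    simpa [hW _ (hU' u hu)] using hU u hu.1
  · have hker : U' ⊓ LinearMap.ker (LinearMap.fst k V₁ V₂) ≤ U ⊓ N := fun u hu =>
      ⟨hu.1.1, hu.2, hU' u hu.1⟩
    have := Submodule.finrank_mono hker
    have := finrank_le_finrank_map_add_finrank_inf_ker (LinearMap.fst k V₁ V₂) U'
    have : finrank k U + finrank k (U ⊓ N : Submodule k (V₁ × V₂)) ≤
        finrank k U' + finrank k N := (hQ₁.prod hQ₂).finrank_add_finrank_inf_le hU N
    have := hQ₂.two_mul_finrank_le hW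
    have : finrank k N = finrank k W := by rw [finrank_submodule_prod, finrank_bot, zero_add]
    rw [Module.finrank_prod] at hdim
    omega

lemma trans [CharP k 2] (h₁₂ : HasLagrangian (Q₁.prod Q₂)) (h₂₃ : HasLagrangian (Q₂.prod Q₃))
    (hQ₁ : IsNonsingular Q₁) (hQ₂ : IsNonsingular Q₂) (hQ₃ : IsNonsingular Q₃) :
    HasLagrangian (Q₁.prod Q₃) := by
  refine cancel_right (Q₂ := Q₂.prod Q₂) ?_ (prod_self Q₂) (hQ₁.prod hQ₃) (hQ₂.prod hQ₂)
  refine (h₁₂.prod h₂₃).of_equivalent ⟨⟨(LinearEquiv.prodCongr (.refl k _)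
    (LinearEquiv.prodComm k _ _)).trans (LinearEquiv.prodProdProdComm k _ _ _ _), fun x => ?_⟩⟩
  simp only [AddHom.toFun_eq_coe, LinearMap.coe_toAddHom, LinearEquiv.coe_coe,
    LinearEquiv.trans_apply, LinearEquiv.prodCongr_apply, LinearEquiv.refl_apply,
    LinearEquiv.prodComm_apply, LinearEquiv.prodProdProdComm_apply, QuadraticMap.prod_apply,
    Prod.fst_swap, Prod.snd_swap]
  abel

end HasLagrangian

end Lagrangian

section Matrix

lemma basisFun_eq_comp {F E ι : Type*} [Field F] [Field E] [Finite ι] (f : F →+* E) (i : ι) :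
    Pi.basisFun E ι i = f ∘ Pi.basisFun F ι i := by
  classical
  ext j
  simp [Pi.single_apply, apply_ite f]

section CommRing

variable {R S ι : Type*} [CommRing R] [CommRing S] [Fintype ι] [DecidableEq ι]

lemma toQuadraticForm'_apply (M : Matrix ι ι R) (x : ι → R) :
    M.toQuadraticForm' x = x ⬝ᵥ M *ᵥ x :=
  Matrix.toLinearMap₂'_apply' M x x

lemma polar_toQuadraticForm' (M : Matrix ι ι R) (x y : ι → R) :
    polar M.toQuadraticForm' x y = ((M + Mᵀ) *ᵥ x) ⬝ᵥ y := by
  simp only [polar, toQuadraticForm'_apply, Matrix.mulVec_add, dotProduct_add, add_dotProduct,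
    Matrix.add_mulVec, Matrix.mulVec_transpose, ← Matrix.dotProduct_mulVec,
    dotProduct_comm (M *ᵥ x) y]
  ring

lemma toQuadraticForm'_map_comp (f : R →+* S) (M : Matrix ι ι R) (x : ι → R) :
    (M.map f).toQuadraticForm' (f ∘ x) = f (M.toQuadraticForm' x) := by
  have hM : M.map f *ᵥ (f ∘ x) = f ∘ (M *ᵥ x) := funext fun i => (f.map_mulVec M x i).symm
  rw [toQuadraticForm'_apply, toQuadraticForm'_apply, hM, f.map_dotProduct]

lemma polar_toQuadraticForm'_map_comp (f : R →+* S) (M : Matrix ι ι R) (x y : ι → R) :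
    polar (M.map f).toQuadraticForm' (f ∘ x) (f ∘ y) = f (polar M.toQuadraticForm' x y) := by
  have hadd : f ∘ (x + y) = f ∘ x + f ∘ y := funext fun i => map_add f _ _
  simp only [polar, map_sub, ← toQuadraticForm'_map_comp, hadd]

end CommRing

variable {F E ι κ : Type*} [Field F] [Field E] [Fintype ι] [DecidableEq ι]

lemma isNonsingular_toQuadraticForm'_iff (M : Matrix ι ι F) :
    IsNonsingular M.toQuadraticForm' ↔ (M + Mᵀ).det ≠ 0 := by
  rw [Ne, ← Matrix.exists_mulVec_eq_zero_iff, IsNonsingular]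
  simp only [polar_toQuadraticForm', dotProduct_eq_zero_iff, not_exists, not_and, not_imp_not]

lemma isNonsingular_toQuadraticForm'_map_iff (f : F →+* E) (M : Matrix ι ι F) :
    IsNonsingular (M.map f).toQuadraticForm' ↔ IsNonsingular M.toQuadraticForm' := by
  have hmap : M.map f + (M.map f)ᵀ = f.mapMatrix (M + Mᵀ) :=
    Matrix.ext fun i j => (map_add f _ _).symm
  rw [isNonsingular_toQuadraticForm'_iff, isNonsingular_toQuadraticForm'_iff, hmap,
    ← RingHom.map_det, map_ne_zero]

lemma toQuadraticForm'_smul (a : F) (M : Matrix ι ι F) :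
    (a • M).toQuadraticForm' = a • M.toQuadraticForm' := by
  ext x
  simp [toQuadraticForm'_apply, Matrix.smul_mulVec]

lemma toQuadraticForm'_reindex [Fintype κ] [DecidableEq κ] (e : ι ≃ κ) (M : Matrix ι ι F)
    (x : κ → F) : (M.reindex e e).toQuadraticForm' x = M.toQuadraticForm' (x ∘ e) := by
  rw [toQuadraticForm'_apply, toQuadraticForm'_apply, Matrix.reindex_apply,
    Matrix.submatrix_mulVec_equiv, Equiv.symm_symm, dotProduct_comp_equiv_symm]

lemma toQuadraticForm'_fromBlocks [Fintype κ] [DecidableEq κ] (M : Matrix ι ι F)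
    (N : Matrix κ κ F) (x : ι ⊕ κ → F) :
    (Matrix.fromBlocks M 0 0 N).toQuadraticForm' x =
      M.toQuadraticForm' (x ∘ Sum.inl) + N.toQuadraticForm' (x ∘ Sum.inr) := by
  obtain ⟨u, v, rfl⟩ : ∃ u v, x = Sum.elim u v := ⟨_, _, (Sum.elim_comp_inl_inr x).symm⟩
  simp [toQuadraticForm'_apply, Matrix.fromBlocks_mulVec]

lemma quadraticForm_ext_basis {R ι V : Type*} [CommRing R] [Finite ι] [AddCommGroup V] [Module R V]
    (b : Module.Basis ι R V) {Q₁ Q₂ : QuadraticForm R V} (h : ∀ i, Q₁ (b i) = Q₂ (b i))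
    (hpolar : ∀ i j, polar Q₁ (b i) (b j) = polar Q₂ (b i) (b j)) : Q₁ = Q₂ := by
  classical
  let _ : LinearOrder ι := linearOrderOfSTO WellOrderingRel
  rw [← Q₁.toQuadraticMap_toBilin b, ← Q₂.toQuadraticMap_toBilin b]
  congr 1
  refine b.ext fun i => b.ext fun j => ?_
  simp [QuadraticMap.toBilin_apply, h, hpolar]

/-- Extension of scalars along a field homomorphism `f`, for maps between coordinate spaces. -/
noncomputable def mapLin (f : F →+* E) (g : (ι → F) →ₗ[F] (κ → F)) : (ι → E) →ₗ[E] (κ → E) :=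
  Matrix.toLin' ((LinearMap.toMatrix' g).map f)

lemma mapLin_comp (f : F →+* E) (g : (ι → F) →ₗ[F] (κ → F)) (x : ι → F) :
    mapLin f g (f ∘ x) = f ∘ g x := by
  ext i
  rw [mapLin, Matrix.toLin'_apply, ← RingHom.map_mulVec, LinearMap.toMatrix'_mulVec]
  rfl

lemma mapLin_injective [Finite κ] (f : F →+* E) {g : (ι → F) →ₗ[F] (κ → F)}
    (hg : Function.Injective g) : Function.Injective (mapLin f g) := by
  classical
  cases nonempty_fintype κ
  obtain ⟨h, hh⟩ := LinearMap.exists_leftInverse_of_injective g (LinearMap.ker_eq_bot.2 hg)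
  have hcomp : mapLin f h ∘ₗ mapLin f g = LinearMap.id := by
    rw [mapLin, mapLin, ← Matrix.toLin'_mul, ← Matrix.map_mul, ← LinearMap.toMatrix'_comp, hh]
    simp
  exact Function.LeftInverse.injective (g := mapLin f h) fun x => LinearMap.congr_fun hcomp x

lemma toQuadraticForm'_mapLin [Fintype κ] [DecidableEq κ] (f : F →+* E) {M : Matrix ι ι F}
    {N : Matrix κ κ F} {g : (ι → F) →ₗ[F] (κ → F)}
    (hg : ∀ x, N.toQuadraticForm' (g x) = M.toQuadraticForm' x)
    (x : ι → E) : (N.map f).toQuadraticForm' (mapLin f g x) = (M.map f).toQuadraticForm' x := by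
  suffices (N.map f).toQuadraticForm'.comp (mapLin f g) = (M.map f).toQuadraticForm' from
    congrArg (· x) this
  refine quadraticForm_ext_basis (Pi.basisFun E ι) (fun i => ?_) fun i j => ?_
  · rw [QuadraticMap.comp_apply, basisFun_eq_comp f, mapLin_comp, toQuadraticForm'_map_comp,
      toQuadraticForm'_map_comp, hg]
  · have hcomp : polar ((N.map f).toQuadraticForm'.comp (mapLin f g)) (Pi.basisFun E ι i)
        (Pi.basisFun E ι j) = polar (N.map f).toQuadraticForm' (mapLin f g (Pi.basisFun E ι i))
          (mapLin f g (Pi.basisFun E ι j)) := by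
      simp only [polar, QuadraticMap.comp_apply, map_add]
    rw [hcomp, basisFun_eq_comp f, basisFun_eq_comp f, mapLin_comp, mapLin_comp,
      polar_toQuadraticForm'_map_comp, polar_toQuadraticForm'_map_comp, polar_map_isometry hg]

lemma HasLagrangian.toQuadraticForm'_map {M : Matrix ι ι F} (h : HasLagrangian M.toQuadraticForm')
    (f : F →+* E) : HasLagrangian (M.map f).toQuadraticForm' := by
  obtain ⟨U, hU, hdim⟩ := h
  let g := U.subtype ∘ₗ (Module.finBasis F U).equivFun.symm.toLinearMap
  have hg : Function.Injective g :=
    U.injective_subtype.comp (Module.finBasis F U).equivFun.symm.injective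
  refine ⟨LinearMap.range (mapLin f g), ?_, ?_⟩
  · rintro _ ⟨x, rfl⟩
    rw [toQuadraticForm'_mapLin (M := 0) f fun x => ?_]
    · simp [toQuadraticForm'_apply]
    · rw [hU (g x) (Subtype.coe_prop _)]; simp [toQuadraticForm'_apply]
  · rw [LinearMap.finrank_range_of_inj (mapLin_injective f hg)]
    simpa using hdim

end Matrix

section Form

variable {F E : Type*} [Field F] [Field E]

/-- The quadratic form on coordinate vectors described by a coefficient matrix. -/
noncomputable def form (q : QF F) : QuadraticForm F (Fin q.dim → F) := q.c.toQuadraticForm'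

lemma form_apply (q : QF F) (x : Fin q.dim → F) : q.form x = q.eval x := by
  simp only [form, toQuadraticForm'_apply, eval, dotProduct, Matrix.mulVec, Finset.mul_sum]
  exact Finset.sum_congr rfl fun i _ => Finset.sum_congr rfl fun j _ => by ring

lemma isometric_iff {q q' : QF F} : Isometric q q' ↔ q.form.Equivalent q'.form :=
  ⟨fun ⟨e, he⟩ => ⟨⟨e, fun x => by simpa [form_apply] using he x⟩⟩,
    fun ⟨e⟩ => ⟨e.toLinearEquiv, fun x => by
      rw [← form_apply, ← form_apply]; exact e.map_app x⟩⟩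

lemma nonsingular_iff {q : QF F} : q.Nonsingular ↔ IsNonsingular q.form := by
  simp only [Nonsingular, IsNonsingular, form, polar_toQuadraticForm', dotProduct_eq_zero_iff]

lemma orthSum_equivalent (q q' : QF F) :
    (q.orthSum q').form.Equivalent (q.form.prod q'.form) :=
  ⟨⟨(LinearEquiv.funCongrLeft F F finSumFinEquiv).trans
    (LinearEquiv.sumArrowLequivProdArrow _ _ F F), fun x =>
      ((toQuadraticForm'_reindex finSumFinEquiv (.fromBlocks q.c 0 0 q'.c) x).trans
        (toQuadraticForm'_fromBlocks q.c q'.c (x ∘ finSumFinEquiv))).symm⟩⟩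

lemma isNonsingular_orthSum {q q' : QF F} (hq : IsNonsingular q.form)
    (hq' : IsNonsingular q'.form) : IsNonsingular (q.orthSum q').form :=
  (hq.prod hq').of_equivalent (orthSum_equivalent q q').symm

lemma hasLagrangian_orthSum_iff {q q' : QF F} :
    HasLagrangian (q.orthSum q').form ↔ HasLagrangian (q.form.prod q'.form) :=
  ⟨fun h => h.of_equivalent (orthSum_equivalent q q'),
    fun h => h.of_equivalent (orthSum_equivalent q q').symm⟩

lemma form_smul (a : F) (q : QF F) : (q.smul a).form = a • q.form :=
  toQuadraticForm'_smul a q.c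

/-- The form of `bin a b`, with its coordinate space displayed as `Fin 2 → F`. -/
noncomputable def binForm (a b : F) : QuadraticForm F (Fin 2 → F) :=
  !![a, 1; 0, b].toQuadraticForm'

lemma binForm_apply (a b : F) (x : Fin 2 → F) :
    binForm a b x = a * x 0 ^ 2 + x 0 * x 1 + b * x 1 ^ 2 := by
  refine (toQuadraticForm'_apply !![a, 1; 0, b] x).trans ?_
  simp only [dotProduct, Matrix.mulVec, Fin.sum_univ_two, Matrix.of_apply, Matrix.cons_val_zero,
    Matrix.cons_val_one]
  ring

lemma form_diag {n : ℕ} (v x : Fin n → F) : (diag v).form x = ∑ i, v i * x i ^ 2 := by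
  refine (toQuadraticForm'_apply (Matrix.diagonal v) x).trans (Finset.sum_congr rfl fun i _ => ?_)
  rw [Matrix.mulVec_diagonal]
  ring

lemma map_orthSum (f : F →+* E) (q q' : QF F) :
    (q.orthSum q').map f = (q.map f).orthSum (q'.map f) := by
  have := Matrix.fromBlocks_map q.c 0 0 q'.c f
  simp only [Matrix.map_zero f (map_zero f)] at this
  exact congrArg (fun M => QF.mk _ (Matrix.reindex finSumFinEquiv finSumFinEquiv M)) this

protected lemma map_smul (f : F →+* E) (a : F) (q : QF F) :
    (q.smul a).map f = (q.map f).smul (f a) :=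
  congrArg (QF.mk _) (Matrix.ext fun i j => map_mul f a (q.c i j))

lemma map_diag (f : F →+* E) {n : ℕ} (v : Fin n → F) : (diag v).map f = diag (f ∘ v) :=
  congrArg (QF.mk _) (Matrix.diagonal_map (map_zero f))

lemma isNonsingular_map_iff {q : QF F} (f : F →+* E) :
    IsNonsingular (q.map f).form ↔ IsNonsingular q.form :=
  isNonsingular_toQuadraticForm'_map_iff f q.c

lemma HasLagrangian.map {q : QF F} (h : HasLagrangian q.form) (f : F →+* E) :
    HasLagrangian (q.map f).form :=
  h.toQuadraticForm'_map f

lemma form_map_comp (f : F →+* E) (q : QF F) (x : Fin q.dim → F) :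
    (q.map f).form (f ∘ x) = f (q.form x) :=
  toQuadraticForm'_map_comp f q.c x

end Form

section Split

variable {F V : Type*} [Field F] [AddCommGroup V] [Module F V]

lemma exists_toQuadraticForm'_equivalent [FiniteDimensional F V] (Q : QuadraticForm F V) :
    ∃ (n : ℕ) (N : Matrix (Fin n) (Fin n) F), Q.Equivalent N.toQuadraticForm' := by
  let b := Module.finBasis F V
  refine ⟨_, LinearMap.BilinForm.toMatrix b (Q.toBilin b), ⟨⟨b.equivFun, fun x => ?_⟩⟩⟩
  refine (toQuadraticForm'_apply _ _).trans ?_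
  conv_rhs => rw [← Q.toQuadraticMap_toBilin b, LinearMap.BilinMap.toQuadraticMap_apply]
  exact (LinearMap.BilinForm.apply_eq_dotProduct_toMatrix_mulVec b (Q.toBilin b) x x).symm

lemma exists_isometryEquiv_binForm_prod_restrict [CharP F 2] {Q : QuadraticForm F V} {x y : V}
    (hxy : polar Q x y = 1) :
    ∃ e : ((binForm (Q x) (Q y)).prod (Q.restrict
      (LinearMap.ker (polarBilin Q x) ⊓ LinearMap.ker (polarBilin Q y)))).IsometryEquiv Q,
      e (![1, 0], 0) = x := by
  have hyx : polar Q y x = 1 := by rw [QuadraticMap.polar_comm, hxy]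
  set N := LinearMap.ker (polarBilin Q x) ⊓ LinearMap.ker (polarBilin Q y)
  let T : (Fin 2 → F) × N →ₗ[F] V :=
    (Fintype.linearCombination F ![x, y]).coprod N.subtype
  have hT (u : Fin 2 → F) (n : N) : T (u, n) = u 0 • x + u 1 • y + n := by
    simp [T, Fintype.linearCombination_apply]
  have hpx (u : Fin 2 → F) (n : N) : polar Q x (T (u, n)) = u 1 := by
    have : polar Q x n = 0 := n.2.1
    simp [hT, this, hxy, CharTwo.two_eq_zero]
  have hpy (u : Fin 2 → F) (n : N) : polar Q y (T (u, n)) = u 0 := by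
    have : polar Q y n = 0 := n.2.2
    simp [hT, this, hyx, CharTwo.two_eq_zero]
  have hinj : Function.Injective T := (injective_iff_map_eq_zero T).2 fun ⟨u, n⟩ h => by
    have hu : u = 0 := by ext i; fin_cases i <;> simp [← hpx u n, ← hpy u n, h]
    rw [hT] at h
    simp_all
  have hsurj : Function.Surjective T := fun v => by
    refine ⟨(![polar Q y v, polar Q x v], ⟨v - polar Q y v • x - polar Q x v • y, ?_, ?_⟩), ?_⟩
    · simp [sub_eq_add_neg, hxy, CharTwo.two_eq_zero]
    · simp [sub_eq_add_neg, hyx, CharTwo.two_eq_zero]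
    · rw [hT]
      simp
  refine ⟨⟨LinearEquiv.ofBijective T ⟨hinj, hsurj⟩, fun ⟨u, n⟩ => ?_⟩, ?_⟩
  · have hx : polar Q x n = 0 := n.2.1
    have hy : polar Q y n = 0 := n.2.2
    change Q (T (u, n)) = binForm (Q x) (Q y) u + Q n
    rw [hT, QuadraticMap.map_add Q, QuadraticMap.map_add Q, binForm_apply]
    simp only [QuadraticMap.polar_add_left, QuadraticMap.polar_smul_left, hx, hy, smul_eq_mul,
      QuadraticMap.polar_smul_right, QuadraticMap.map_smul, hxy]
    ring
  · change T _ = x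
    rw [hT]
    simp

lemma exists_isometryEquiv_binForm_prod [CharP F 2] [FiniteDimensional F V]
    {Q : QuadraticForm F V} (hQ : IsNonsingular Q) {x : V} (hx : x ≠ 0) :
    ∃ (a b : F) (n : ℕ) (N : Matrix (Fin n) (Fin n) F)
      (e : Q.IsometryEquiv ((binForm a b).prod N.toQuadraticForm')), e x = (![1, 0], 0) := by
  obtain ⟨y, hy⟩ : ∃ y, polar Q x y ≠ 0 := by
    by_contra! h
    exact hx (hQ x h)
  obtain ⟨e, he⟩ := exists_isometryEquiv_binForm_prod_restrict
    (Q := Q) (x := x) (y := (polar Q x y)⁻¹ • y) (by simp [hy])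
  obtain ⟨n, N, ⟨e'⟩⟩ := exists_toQuadraticForm'_equivalent (Q.restrict
    (LinearMap.ker (polarBilin Q x) ⊓ LinearMap.ker (polarBilin Q ((polar Q x y)⁻¹ • y))))
  refine ⟨_, _, n, N, e.symm.trans ((QuadraticMap.IsometryEquiv.refl _).prod e'), ?_⟩
  have hex : e.symm x = (![1, 0], 0) := e.toLinearEquiv.symm_apply_eq.2 he.symm
  change ((QuadraticMap.IsometryEquiv.refl _).prod e') (e.symm x) = _
  rw [hex]
  exact Prod.ext rfl (map_zero e'.toLinearEquiv)

end Split

section Isotropic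

variable {F E ι κ : Type*} [Field F] [Field E] [Fintype ι] [DecidableEq ι] [Fintype κ]
  [DecidableEq κ] {M : Matrix ι ι F} {N : Matrix κ κ F}

lemma exists_isometryEquiv_map_prod {κ₁ : Type*} [Fintype κ₁] [DecidableEq κ₁] (f : F →+* E)
    {N₁ : Matrix κ₁ κ₁ F}
    (e : M.toQuadraticForm'.IsometryEquiv (N₁.toQuadraticForm'.prod N.toQuadraticForm')) :
    ∃ e' : (M.map f).toQuadraticForm'.IsometryEquiv
        ((N₁.map f).toQuadraticForm'.prod (N.map f).toQuadraticForm'),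
      ∀ x, e' (f ∘ x) = (f ∘ (e x).1, f ∘ (e x).2) := by
  let g := e.toLinearEquiv.trans (LinearEquiv.sumArrowLequivProdArrow _ _ F F).symm
  have hg (x : ι → F) : (Matrix.fromBlocks N₁ 0 0 N).toQuadraticForm' (g.toLinearMap x) =
      M.toQuadraticForm' x :=
    (toQuadraticForm'_fromBlocks N₁ N (g x)).trans (e.map_app x)
  have hcard : finrank E (ι → E) = finrank E (κ₁ ⊕ κ → E) := by
    have := g.finrank_eq
    rwa [Module.finrank_fintype_fun_eq_card, Module.finrank_fintype_fun_eq_card] at this ⊢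
  let G := (LinearMap.linearEquivOfInjective _ (mapLin_injective f g.injective) hcard).trans
    (LinearEquiv.sumArrowLequivProdArrow _ _ E E)
  refine ⟨⟨G, fun x => ?_⟩, fun x => ?_⟩
  · have hmap := toQuadraticForm'_mapLin f hg x
    rw [Matrix.fromBlocks_map, Matrix.map_zero f (map_zero f), Matrix.map_zero f (map_zero f),
      toQuadraticForm'_fromBlocks] at hmap
    exact hmap
  · exact congrArg (LinearEquiv.sumArrowLequivProdArrow _ _ E E) (mapLin_comp f g.toLinearMap x)

lemma exists_isometryEquiv_map_binForm_prod (f : F →+* E) {a b : F}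
    (e : M.toQuadraticForm'.IsometryEquiv ((binForm a b).prod N.toQuadraticForm')) :
    ∃ e' : (M.map f).toQuadraticForm'.IsometryEquiv
        ((binForm (f a) (f b)).prod (N.map f).toQuadraticForm'),
      ∀ x, e' (f ∘ x) = (f ∘ (e x).1, f ∘ (e x).2) := by
  have hbin : !![a, 1; 0, b].map f = !![f a, 1; 0, f b] := by
    ext i j
    fin_cases i <;> fin_cases j <;> simp
  have := exists_isometryEquiv_map_prod f e
  rwa [hbin] at this

lemma exists_isometryEquiv_binForm_zero_prod [CharP E 2] {V : Type*} [AddCommGroup V] [Module E V]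
    {a b : E} {P : QuadraticForm E V} {u : Fin 2 → E} {y : V} (hu : u 1 = 1)
    (h : (binForm a b).prod P (u, y) = 0) :
    ∃ e : ((binForm a 0).prod
        (P + a • QuadraticMap.linMulLin (polarBilin P y) (polarBilin P y))).IsometryEquiv
      ((binForm a b).prod P), e (![0, 1], 0) = (u, y) := by
  let T : ((Fin 2 → E) × V) ≃ₗ[E] (Fin 2 → E) × V :=
    { toFun := fun w => (![w.1 0 + w.1 1 * u 0 + polar P y w.2, w.1 1], w.2 + w.1 1 • y)
      invFun := fun w => (![w.1 0 - w.1 1 * u 0 - polar P y (w.2 - w.1 1 • y), w.1 1],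
        w.2 - w.1 1 • y)
      map_add' := fun v w => by
        refine Prod.ext (List.ofFn_injective ?_) ?_
        · simp; ring
        · simp; module
      map_smul' := fun c w => by
        refine Prod.ext (List.ofFn_injective ?_) ?_
        · simp; ring
        · simp; module
      left_inv := fun w => Prod.ext (List.ofFn_injective (by simp; ring)) (by simp)
      right_inv := fun w => Prod.ext (List.ofFn_injective (by simp; ring)) (by simp) }
  have hT : T (![0, 1], 0) = (u, y) :=
    Prod.ext (List.ofFn_injective (by simp [T, hu])) (by simp [T])
  refine ⟨⟨T, fun w => ?_⟩, hT⟩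
  simp only [QuadraticMap.prod_apply, binForm_apply, hu] at h
  have hw : P (w.2 + w.1 1 • y) = P w.2 + w.1 1 * w.1 1 * P y + w.1 1 * polar P y w.2 := by
    rw [QuadraticMap.map_add P, QuadraticMap.map_smul, QuadraticMap.polar_smul_right,
      QuadraticMap.polar_comm P w.2 y, smul_eq_mul, smul_eq_mul]
  change binForm a b ![w.1 0 + w.1 1 * u 0 + polar P y w.2, w.1 1] + P (w.2 + w.1 1 • y) =
    binForm a 0 w.1 + (P w.2 + a * (polar P y w.2 * polar P y w.2))
  simp only [binForm_apply, hw, Matrix.cons_val_zero, Matrix.cons_val_one]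
  linear_combination w.1 1 ^ 2 * h + (a * w.1 0 * w.1 1 * u 0 + a * w.1 0 * polar P y w.2 +
    a * w.1 1 * u 0 * polar P y w.2 + w.1 1 * polar P y w.2) * CharTwo.two_eq_zero (R := E)

lemma exists_toQuadraticForm'_map_eq_add_sq [CharP E 2]
    {f : F →+* E} (hf : ∀ x, ∃ y, f y = x ^ 2) (M : Matrix ι ι F) (a : F) (l : (ι → E) →ₗ[E] E) :
    ∃ N : Matrix ι ι F, (N.map f).toQuadraticForm' =
      (M.map f).toQuadraticForm' + f a • QuadraticMap.linMulLin l l := by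
  choose s hs using fun i => hf (l fun j => if i = j then 1 else 0)
  refine ⟨M + a • Matrix.diagonal s, QuadraticMap.ext fun x => ?_⟩
  have hmap : (M + a • Matrix.diagonal s).map f = M.map f + f a • Matrix.diagonal (f ∘ s) := by
    ext i j
    simp [Matrix.diagonal_apply, apply_ite f]
  have hl : l x * l x = ∑ i, f (s i) * x i ^ 2 := by
    rw [l.pi_apply_eq_sum_univ x, ← sq, CharTwo.sum_sq]
    exact Finset.sum_congr rfl fun i _ => by rw [hs, smul_eq_mul, mul_pow, mul_comm]
  simp only [hmap, _root_.add_apply, _root_.smul_apply, QuadraticMap.linMulLin_apply,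
    toQuadraticForm'_apply, Matrix.add_mulVec, dotProduct_add, Matrix.smul_mulVec, dotProduct_smul,
    hl]
  congr 2
  exact Finset.sum_congr rfl fun i _ => by rw [Matrix.mulVec_diagonal, Function.comp_apply]; ring

lemma exists_polar_comp_ne_zero {f : F →+* E} (hM : IsNonsingular M.toQuadraticForm')
    {z : ι → E} (hz : z ≠ 0) : ∃ x : ι → F, polar (M.map f).toQuadraticForm' z (f ∘ x) ≠ 0 := by
  by_contra! h
  have hzero : polarBilin (M.map f).toQuadraticForm' z = 0 :=
    (Pi.basisFun E ι).ext fun i => by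
      rw [basisFun_eq_comp f]
      exact h _
  exact hz ((isNonsingular_toQuadraticForm'_map_iff f M).2 hM z (LinearMap.congr_fun hzero))

/-- This is where `E ^ 2 ⊆ F` enters: the complement of a suitable hyperbolic plane is again
defined over `F`. -/
lemma exists_isometryEquiv_map_of_isotropic [CharP F 2] {f : F →+* E}
    (hf : ∀ x, ∃ y, f y = x ^ 2) (hM : IsNonsingular M.toQuadraticForm') {z : ι → E} (hz : z ≠ 0)
    (hMz : (M.map f).toQuadraticForm' z = 0) :
    ∃ (c t : E) (n : ℕ) (N : Matrix (Fin n) (Fin n) F) (e : (M.map f).toQuadraticForm'.IsometryEquiv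
      ((binForm c 0).prod (N.map f).toQuadraticForm')), e z = (![0, t], 0) := by
  have : CharP E 2 := (f.charP_iff f.injective 2).1 inferInstance
  obtain ⟨x, hzx⟩ := exists_polar_comp_ne_zero (f := f) hM hz
  have hx : x ≠ 0 := by
    rintro rfl
    simp [Function.comp_def, ← Pi.zero_def] at hzx
  obtain ⟨a, b, n, N, e, he⟩ := exists_isometryEquiv_binForm_prod hM hx
  obtain ⟨e', he'⟩ := exists_isometryEquiv_map_binForm_prod f e
  obtain ⟨⟨u, y⟩, hu⟩ : ∃ w, e' z = w := ⟨_, rfl⟩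
  have hu1 : u 1 ≠ 0 := fun h => hzx <| by
    rw [← polar_map_isometry (g := e'.toLinearEquiv.toLinearMap) e'.map_app]
    change polar _ (e' z) (e' (f ∘ x)) = 0
    have hplane : polar (binForm (f a) (f b)) u (f ∘ ![1, 0]) = 0 := by
      simp only [polar, binForm_apply, Pi.add_apply, Function.comp_apply, Matrix.cons_val_zero,
        Matrix.cons_val_one, map_one, map_zero, h]
      linear_combination f a * u 0 * CharTwo.two_eq_zero (R := E)
    rw [hu, he', he, QuadraticMap.polar_prod, hplane]
    simp [polar]
  obtain ⟨M', hM'⟩ := exists_toQuadraticForm'_map_eq_add_sq hf N a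
    (polarBilin (N.map f).toQuadraticForm' ((u 1)⁻¹ • y))
  have hzero : (binForm (f a) (f b)).prod (N.map f).toQuadraticForm'
      ((u 1)⁻¹ • u, (u 1)⁻¹ • y) = 0 := by
    rw [← Prod.smul_mk, QuadraticMap.map_smul, ← hu, e'.map_app, hMz, smul_zero]
  have := exists_isometryEquiv_binForm_zero_prod (by simp [hu1]) hzero
  rw [← hM'] at this
  obtain ⟨e'', he''⟩ := this
  refine ⟨_, u 1, n, M', e'.trans e''.symm, e''.toLinearEquiv.symm_apply_eq.2 (hu.trans ?_)⟩
  calc (u, y) = u 1 • ((u 1)⁻¹ • u, (u 1)⁻¹ • y) := by simp [hu1]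
    _ = e''.toLinearEquiv (![0, u 1], 0) := by
      rw [← he'', ← e''.coe_toLinearEquiv, ← map_smul]
      simp

end Isotropic

section HasLagrangian

variable {F E : Type*} [Field F] [Field E]

lemma hasLagrangian_binForm_zero (c : F) : HasLagrangian (binForm c 0) :=
  ⟨Submodule.span F {![0, 1]}, fun u hu => by
    obtain ⟨a, rfl⟩ := Submodule.mem_span_singleton.1 hu
    simp [binForm_apply], by
    rw [finrank_span_singleton (by simp), Module.finrank_fin_fun]⟩

lemma HasLagrangian.of_equivalent_prod [CharP F 2] {V V₁ V₂ : Type*} [AddCommGroup V] [Module F V]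
    [AddCommGroup V₁] [Module F V₁] [AddCommGroup V₂] [Module F V₂] [FiniteDimensional F V₁]
    [FiniteDimensional F V₂] {Q : QuadraticForm F V} {H : QuadraticForm F V₁}
    {P : QuadraticForm F V₂} (h : Q.Equivalent (H.prod P)) (hH : HasLagrangian H) :
    HasLagrangian (Q.prod P) :=
  (hH.prod (prod_self P)).of_equivalent
    (.trans ⟨⟨(LinearEquiv.prodAssoc F V₁ V₂ V₂).symm, fun _ => add_assoc _ _ _⟩⟩
      (h.symm.prod (.refl P)))

lemma exists_complement_of_isotropic [CharP F 2] {f : F →+* E} (hf : ∀ x, ∃ y, f y = x ^ 2)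
    {φ : QF F} (hφ : IsNonsingular φ.form) {z : Fin (φ.map f).dim → E} (hz : z ≠ 0)
    (hφz : (φ.map f).form z = 0) :
    ∃ (c t : E) (ψ : QF F) (e : (φ.map f).form.IsometryEquiv
      ((binForm c 0).prod (ψ.map f).form)), IsNonsingular ψ.form ∧ e z = (![0, t], 0) := by
  obtain ⟨c, t, n, N, e, he⟩ := exists_isometryEquiv_map_of_isotropic hf hφ hz hφz
  refine ⟨c, t, ⟨n, N⟩, e, ?_, he⟩
  exact (isNonsingular_map_iff f).1
    (((isNonsingular_map_iff f).2 hφ).of_equivalent ⟨e⟩).of_prod_right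

lemma exists_isotropic_complement [CharP F 2] {f : F →+* E} (hf : ∀ x, ∃ y, f y = x ^ 2)
    {φ : QF F} (hφ : IsNonsingular φ.form) {U : Submodule E (Fin (φ.map f).dim → E)}
    (hU : ∀ u ∈ U, (φ.map f).form u = 0) (hU0 : U ≠ ⊥) :
    ∃ ψ : QF F, ψ.dim + 2 = φ.dim ∧ IsNonsingular ψ.form ∧
      HasLagrangian ((φ.map f).form.prod (ψ.map f).form) ∧
      ∃ U' : Submodule E (Fin (ψ.map f).dim → E), (∀ u ∈ U', (ψ.map f).form u = 0) ∧
        finrank E U ≤ finrank E U' + 1 := by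
  have : CharP E 2 := (f.charP_iff f.injective 2).1 inferInstance
  obtain ⟨z, hzU, hz⟩ := U.exists_mem_ne_zero_of_ne_bot hU0
  obtain ⟨c, t, ψ, e, hψ, he⟩ := exists_complement_of_isotropic hf hφ hz (hU z hzU)
  have ht : t ≠ 0 := by
    rintro rfl
    exact hz (e.toLinearEquiv.map_eq_zero_iff.1 (he.trans (by simp)))
  have hfst (u) (hu : u ∈ U) : (e u).1 0 = 0 := by
    have hpolar : polar ((binForm c 0).prod (ψ.map f).form) (e u) (e z) = 0 :=
      (polar_map_isometry (g := e.toLinearEquiv.toLinearMap) e.map_app u z).trans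
        (polar_eq_zero_of_isotropic hU hu hzU)
    rw [he, QuadraticMap.polar_prod] at hpolar
    have hplane : polar (binForm c 0) (e u).1 ![0, t] = (e u).1 0 * t := by
      simp only [polar, binForm_apply, Pi.add_apply, Matrix.cons_val_zero, Matrix.cons_val_one]
      ring
    simpa [hplane, ht] using hpolar
  let p := LinearMap.snd E _ _ ∘ₗ e.toLinearEquiv.toLinearMap
  refine ⟨ψ, ?_, hψ, HasLagrangian.of_equivalent_prod ⟨e⟩ (hasLagrangian_binForm_zero c), U.map p,
    ?_, ?_⟩
  · have := e.toLinearEquiv.finrank_eq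
    rw [Module.finrank_prod] at this
    simp only [Module.finrank_fin_fun] at this
    exact (add_comm _ _).trans this.symm
  · rintro _ ⟨u, hu, rfl⟩
    have := e.map_app u
    rw [hU u hu, QuadraticMap.prod_apply, binForm_apply, hfst u hu] at this
    simpa [p] using this
  · have hker : U ⊓ LinearMap.ker p ≤ Submodule.span E {z} := fun u ⟨hu, hpu⟩ => by
      refine Submodule.mem_span_singleton.2 ⟨(e u).1 1 / t, e.toLinearEquiv.injective ?_⟩
      have h2 : (e u).2 = 0 := hpu
      rw [map_smul]
      refine (congrArg _ he).trans (Prod.ext (List.ofFn_injective ?_) ?_)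
      · simp [ht, hfst u hu]
      · simp [h2]
    have := Submodule.finrank_mono hker
    rw [finrank_span_singleton hz] at this
    have := finrank_le_finrank_map_add_finrank_inf_ker p U
    omega

lemma exists_dim_add_two_mul_eq [CharP F 2] {f : F →+* E} (hf : ∀ x, ∃ y, f y = x ^ 2) {r : ℕ}
    {φ : QF F} (hφ : IsNonsingular φ.form) {U : Submodule E (Fin (φ.map f).dim → E)}
    (hU : ∀ u ∈ U, (φ.map f).form u = 0) (hr : r ≤ finrank E U) :
    ∃ ψ : QF F, ψ.dim + 2 * r = φ.dim ∧ IsNonsingular ψ.form ∧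
      HasLagrangian ((φ.map f).form.prod (ψ.map f).form) := by
  have : CharP E 2 := (f.charP_iff f.injective 2).1 inferInstance
  induction r generalizing φ with
  | zero => exact ⟨φ, rfl, hφ, .prod_self _⟩
  | succ r ih =>
    have hU0 : U ≠ ⊥ := by
      rintro rfl
      simp at hr
    obtain ⟨ψ, hdim, hψ, hlag, U', hU', hle⟩ := exists_isotropic_complement hf hφ hU hU0
    obtain ⟨ψ', hdim', hψ', hlag'⟩ := ih hψ hU' (by omega)
    have hN {q : QF F} (hq : IsNonsingular q.form) := (isNonsingular_map_iff f).2 hq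
    exact ⟨ψ', by omega, hψ', hlag.trans hlag' (hN hφ) (hN hψ) (hN hψ')⟩

end HasLagrangian

section Witt

variable {F V₁ V₂ : Type*} [Field F] [AddCommGroup V₁] [Module F V₁] [AddCommGroup V₂] [Module F V₂]

lemma equivalent_of_prod_zero_equivalent [FiniteDimensional F V₁] [FiniteDimensional F V₂]
    {Q₁ : QuadraticForm F V₁} {Q₂ : QuadraticForm F V₂} (h₁ : IsNonsingular Q₁)
    (h₂ : IsNonsingular Q₂) {W₁ W₂ : Type*} [AddCommGroup W₁] [Module F W₁] [AddCommGroup W₂]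
    [Module F W₂] (h : (Q₁.prod (0 : QuadraticForm F W₁)).Equivalent
      (Q₂.prod (0 : QuadraticForm F W₂))) : Q₁.Equivalent Q₂ := by
  obtain ⟨e⟩ := h
  let g₁ := (QuadraticMap.Isometry.fst Q₂ (M₂ := W₂)).comp
    (e.toIsometry.comp (QuadraticMap.Isometry.inl Q₁ 0))
  let g₂ := (QuadraticMap.Isometry.fst Q₁ (M₂ := W₁)).comp
    (e.symm.toIsometry.comp (QuadraticMap.Isometry.inl Q₂ 0))
  have hg₁ := h₁.injective_of_isometry (g := g₁.toLinearMap) g₁.map_app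
  have hg₂ := h₂.injective_of_isometry (g := g₂.toLinearMap) g₂.map_app
  have hrank := le_antisymm (LinearMap.finrank_le_finrank_of_injective hg₁)
    (LinearMap.finrank_le_finrank_of_injective hg₂)
  exact ⟨⟨LinearMap.linearEquivOfInjective _ hg₁ hrank, g₁.map_app⟩⟩

lemma polar_binForm [CharP F 2] (a b : F) (x y : Fin 2 → F) :
    polar (binForm a b) x y = x 0 * y 1 + x 1 * y 0 := by
  simp only [polar, binForm_apply, Pi.add_apply]
  linear_combination (a * x 0 * y 0 + b * x 1 * y 1) * CharTwo.two_eq_zero (R := F)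

lemma isNonsingular_binForm [CharP F 2] (a b : F) : IsNonsingular (binForm a b) := by
  intro u hu
  have h0 := hu ![0, 1]
  have h1 := hu ![1, 0]
  simp only [polar_binForm, Matrix.cons_val_zero, Matrix.cons_val_one, mul_one, mul_zero, add_zero,
    zero_add] at h0 h1
  exact List.ofFn_injective (by simp [h0, h1])

lemma binForm_zero_equivalent (c : F) : (binForm c 0).Equivalent (binForm 0 0) := by
  let T : (Fin 2 → F) ≃ₗ[F] (Fin 2 → F) :=
    { toFun := fun u => ![u 0, u 1 + c * u 0]
      invFun := fun u => ![u 0, u 1 - c * u 0]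
      map_add' := fun u v => List.ofFn_injective (by simp; ring)
      map_smul' := fun a u => List.ofFn_injective (by simp; ring)
      left_inv := fun u => List.ofFn_injective (by simp)
      right_inv := fun u => List.ofFn_injective (by simp) }
  refine ⟨⟨T, fun u => ?_⟩⟩
  change binForm 0 0 ![u 0, u 1 + c * u 0] = _
  simp only [binForm_apply, Matrix.cons_val_zero, Matrix.cons_val_one]
  ring

lemma hyp_succ_equivalent (k : ℕ) :
    (hyp (k + 1) : QF F).form.Equivalent ((binForm 0 0).prod (hyp k).form) :=
  orthSum_equivalent (bin 0 0) (hyp k)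

lemma isNonsingular_hyp [CharP F 2] : ∀ k, IsNonsingular (hyp k : QF F).form
  | 0 => fun _ _ => Subsingleton.elim (α := Fin 0 → F) _ _
  | k + 1 => ((isNonsingular_binForm 0 0).prod (isNonsingular_hyp k)).of_equivalent
      (hyp_succ_equivalent k).symm

lemma hasLagrangian_hyp : ∀ k, HasLagrangian (hyp k : QF F).form
  | 0 => ⟨⊥, by simp, (Module.finrank_fin_fun F).trans_le (Nat.zero_le _)⟩
  | k + 1 => ((hasLagrangian_binForm_zero 0).prod (hasLagrangian_hyp k)).of_equivalent
      (hyp_succ_equivalent k).symm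

lemma exists_equivalent_hyp [CharP F 2] {φ : QF F} (hφ : IsNonsingular φ.form)
    (h : HasLagrangian φ.form) : ∃ k, φ.form.Equivalent (hyp k).form := by
  obtain ⟨n, hn⟩ : ∃ n, φ.dim = n := ⟨_, rfl⟩
  induction n using Nat.strong_induction_on generalizing φ with
  | _ n ih =>
  obtain ⟨U, hU, hdim⟩ := h
  by_cases hU0 : U = ⊥
  · rw [hU0, finrank_bot, Module.finrank_fin_fun, mul_zero] at hdim
    have : IsEmpty (Fin φ.dim) := ⟨fun i => (i.isLt.trans_le hdim).not_ge i.val.zero_le⟩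
    have : Subsingleton (Fin (hyp 0 : QF F).dim → F) := inferInstanceAs (Subsingleton (Fin 0 → F))
    refine ⟨0, ⟨⟨0, fun x => ?_⟩⟩⟩
    rw [Subsingleton.elim x 0, QuadraticMap.map_zero]
    exact QuadraticMap.map_zero _
  obtain ⟨z, hzU, hz⟩ := U.exists_mem_ne_zero_of_ne_bot hU0
  obtain ⟨c, -, ψ, e, hψ, -⟩ := exists_complement_of_isotropic (f := RingHom.id F)
    (fun x => ⟨x ^ 2, rfl⟩) hφ hz (hU z hzU)
  have hψlag : HasLagrangian ψ.form :=
    (HasLagrangian.of_equivalent ⟨U, hU, hdim⟩ ⟨e⟩).prod_symm.cancel_right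
      (hasLagrangian_binForm_zero c) hψ (isNonsingular_binForm c 0)
  have hψdim : ψ.dim < n := by
    have := e.toLinearEquiv.finrank_eq
    rw [Module.finrank_prod] at this
    simp only [Module.finrank_fin_fun] at this
    change φ.dim = 2 + ψ.dim at this
    omega
  obtain ⟨k, hk⟩ := ih _ hψdim hψ hψlag rfl
  exact ⟨k + 1, QuadraticMap.Equivalent.trans ⟨e⟩
    (((binForm_zero_equivalent c).prod hk).trans (hyp_succ_equivalent k).symm)⟩

lemma hyperbolic_iff [CharP F 2] {φ : QF F} (hφ : IsNonsingular φ.form) :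
    Hyperbolic φ ↔ HasLagrangian φ.form := by
  simp only [Hyperbolic, isometric_iff]
  exact ⟨fun ⟨k, hk⟩ => (hasLagrangian_hyp k).of_equivalent hk.symm, exists_equivalent_hyp hφ⟩

lemma form_zeros (l : ℕ) : (zeros l : QF F).form = (0 : QuadraticForm F (Fin l → F)) :=
  QuadraticMap.ext fun x => (form_diag _ x).trans
    (Finset.sum_eq_zero fun i _ => zero_mul ((x i : F) ^ 2))

lemma orthSum_hyp_zeros_equivalent (q : QF F) (k l : ℕ) :
    (q.orthSum ((hyp k).orthSum (zeros l))).form.Equivalent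
      ((q.form.prod (hyp k).form).prod (0 : QuadraticForm F (Fin l → F))) := by
  rw [← form_zeros]
  exact (orthSum_equivalent _ _).trans (((QuadraticMap.Equivalent.refl _).prod
    (orthSum_equivalent _ _)).trans ⟨⟨(LinearEquiv.prodAssoc F _ _ _).symm,
      fun _ => add_assoc _ _ _⟩⟩)

lemma wittEquiv_iff [CharP F 2] {φ ψ : QF F} (hφ : IsNonsingular φ.form)
    (hψ : IsNonsingular ψ.form) : WittEquiv φ ψ ↔ HasLagrangian (φ.form.prod ψ.form) := by
  constructor
  · rintro ⟨k, k', l, l', h⟩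
    have hφk := hφ.prod (isNonsingular_hyp k)
    have hψk := hψ.prod (isNonsingular_hyp k')
    have he := equivalent_of_prod_zero_equivalent hφk hψk
      ((orthSum_hyp_zeros_equivalent φ k l).symm.trans
        ((isometric_iff.1 h).trans (orthSum_hyp_zeros_equivalent ψ k' l')))
    have hstab {q : QF F} (m : ℕ) : HasLagrangian ((q.form.prod (hyp m).form).prod q.form) :=
      .of_equivalent_prod ⟨.prodComm _ _⟩ (hasLagrangian_hyp m)
    have hφψ : HasLagrangian ((φ.form.prod (hyp k).form).prod (ψ.form.prod (hyp k').form)) :=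
      (HasLagrangian.prod_self _).of_equivalent ((QuadraticMap.Equivalent.refl _).prod he)
    exact ((hstab k).prod_symm.trans hφψ hφ hφk hψk).trans (hstab k') hφ hψk hψ
  · intro h
    obtain ⟨m, hm⟩ := exists_equivalent_hyp (φ := φ.orthSum ψ)
      (isNonsingular_orthSum hφ hψ) (hasLagrangian_orthSum_iff.2 h)
    obtain ⟨m', hm'⟩ := exists_equivalent_hyp (φ := ψ.orthSum ψ)
      (isNonsingular_orthSum hψ hψ) (hasLagrangian_orthSum_iff.2 (.prod_self _))
    have hswap : (φ.form.prod (ψ.form.prod ψ.form)).Equivalent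
        (ψ.form.prod (φ.form.prod ψ.form)) :=
      QuadraticMap.Equivalent.trans ⟨.prodComm _ _⟩ (QuadraticMap.Equivalent.trans
        ⟨⟨LinearEquiv.prodAssoc F _ _ _, fun _ => (add_assoc _ _ _).symm⟩⟩
        ((QuadraticMap.Equivalent.refl _).prod ⟨.prodComm _ _⟩))
    have hhyp : (φ.form.prod (hyp m').form).Equivalent (ψ.form.prod (hyp m).form) :=
      ((QuadraticMap.Equivalent.refl _).prod
        (hm'.symm.trans (orthSum_equivalent ψ ψ))).trans
      (hswap.trans ((QuadraticMap.Equivalent.refl _).prod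
        ((orthSum_equivalent φ ψ).symm.trans hm)))
    exact ⟨m', m, 0, 0, isometric_iff.2 ((orthSum_hyp_zeros_equivalent φ m' 0).trans
      ((hhyp.prod (QuadraticMap.Equivalent.refl _)).trans
        (orthSum_hyp_zeros_equivalent ψ m 0).symm))⟩

end Witt

section Pfister

variable {F E : Type*} [Field F] [Field E]

protected lemma map_unit (f : F →+* E) : (unit : QF F).map f = unit := by
  rw [unit, map_diag]
  exact congrArg diag (funext fun _ => f.map_one)

lemma map_pfTensor (f : F →+* E) (l : List F) (q : QF F) :
    (pfTensor l q).map f = pfTensor (l.map f) (q.map f) := by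
  induction l with
  | nil => rfl
  | cons a l ih =>
    change ((pfTensor l q).orthSum ((pfTensor l q).smul a)).map f = _
    rw [map_orthSum, QF.map_smul, ih]
    rfl

lemma map_bin (f : F →+* E) (a b : F) : (bin a b).map f = bin (f a) (f b) := by
  have h : (!![a, 1; 0, b]).map f = !![f a, 1; 0, f b] := by
    ext i j
    fin_cases i <;> fin_cases j <;> simp
  exact congrArg (QF.mk 2) h

lemma unit_form_apply (x : Fin 1 → F) : (unit : QF F).form x = x 0 ^ 2 :=
  (form_diag _ x).trans (by simp)

lemma pfTensor_cons_equivalent (a : F) (l : List F) (q : QF F) :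
    (pfTensor (a :: l) q).form.Equivalent ((pfTensor l q).form.prod (a • (pfTensor l q).form)) := by
  rw [← form_smul]
  exact orthSum_equivalent _ _

lemma isNonsingular_pfTensor {l : List F} (hl : ∀ a ∈ l, a ≠ 0) {q : QF F}
    (hq : IsNonsingular q.form) : IsNonsingular (pfTensor l q).form := by
  induction l with
  | nil => exact hq
  | cons a l ih =>
    obtain ⟨ha, hl⟩ := List.forall_mem_cons.1 hl
    exact ((ih hl).prod ((ih hl).smul ha)).of_equivalent (pfTensor_cons_equivalent a l q).symm

section Pi

variable {ι κ V V₁ V₂ : Type*} [Fintype ι] [Fintype κ] [AddCommGroup V] [Module F V]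
  [AddCommGroup V₁] [Module F V₁] [AddCommGroup V₂] [Module F V₂]

lemma smul_equivalent_smul {Q₁ : QuadraticForm F V₁} {Q₂ : QuadraticForm F V₂}
    (h : Q₁.Equivalent Q₂) (a : F) : (a • Q₁).Equivalent (a • Q₂) :=
  h.map fun e => ⟨e.toLinearEquiv, fun x => congrArg (a * ·) (e.map_app x)⟩

lemma prod_smul_pi_equivalent (d : ι → F) (a : F) (Q : QuadraticForm F V) :
    ((QuadraticMap.pi fun i => d i • Q).prod (a • QuadraticMap.pi fun i => d i • Q)).Equivalent
      (QuadraticMap.pi fun i => Sum.elim d (a • d) i • Q) :=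
  ⟨⟨(LinearEquiv.sumArrowLequivProdArrow ι ι F V).symm, fun x => by
    simp [LinearEquiv.sumArrowLequivProdArrow, Equiv.sumArrowEquivProdArrow,
      QuadraticMap.pi_apply, Finset.mul_sum, mul_assoc]⟩⟩

lemma pi_smul_prod_equivalent (d : ι → F) (Q₁ : QuadraticForm F V₁) (Q₂ : QuadraticForm F V₂) :
    (QuadraticMap.pi fun i => d i • Q₁.prod Q₂).Equivalent
      ((QuadraticMap.pi fun i => d i • Q₁).prod (QuadraticMap.pi fun i => d i • Q₂)) :=
  ⟨⟨⟨⟨⟨fun x => (fun i => (x i).1, fun i => (x i).2), fun _ _ => rfl⟩, fun _ _ => rfl⟩,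
    fun x i => (x.1 i, x.2 i), fun _ => rfl, fun _ => rfl⟩, fun x => by
    simp [QuadraticMap.pi_apply, mul_add, Finset.sum_add_distrib]⟩⟩

lemma exists_pfTensor_equivalent_pi {l : List F} (hl : ∀ a ∈ l, a ≠ 0) :
    ∃ (ι : Type) (_ : Fintype ι) (i₀ : ι) (d : ι → F), d i₀ = 1 ∧ (∀ i, d i ≠ 0) ∧ ∀ q : QF F,
      (pfTensor l q).form.Equivalent (QuadraticMap.pi fun i => d i • q.form) := by
  induction l with
  | nil => exact ⟨Unit, inferInstance, (), 1, rfl, fun _ => one_ne_zero, fun q =>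
      ⟨⟨(LinearEquiv.funUnique Unit F _).symm, fun x => by simp [QuadraticMap.pi_apply]; rfl⟩⟩⟩
  | cons a l ih =>
    obtain ⟨ha, hl⟩ := List.forall_mem_cons.1 hl
    obtain ⟨ι, _, i₀, d, hd₀, hd, h⟩ := ih hl
    refine ⟨ι ⊕ ι, inferInstance, .inl i₀, Sum.elim d (a • d), hd₀, ?_, fun q => ?_⟩
    · rintro (i | i)
      exacts [hd i, mul_ne_zero ha (hd i)]
    · exact (pfTensor_cons_equivalent a l q).trans
        (((h q).prod (smul_equivalent_smul (h q) a)).trans (prod_smul_pi_equivalent d a q.form))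

lemma pfTensor_orthSum_equivalent {l : List F} (hl : ∀ a ∈ l, a ≠ 0) (q q' : QF F) :
    (pfTensor l (q.orthSum q')).form.Equivalent
      ((pfTensor l q).form.prod (pfTensor l q').form) := by
  obtain ⟨ι, _, -, d, -, -, h⟩ := exists_pfTensor_equivalent_pi hl
  have hsum : (QuadraticMap.pi fun i => d i • (q.orthSum q').form).Equivalent
      (QuadraticMap.pi fun i => d i • q.form.prod q'.form) :=
    .pi fun i => smul_equivalent_smul (orthSum_equivalent q q') (d i)
  exact (h _).trans (hsum.trans ((pi_smul_prod_equivalent d _ _).trans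
    ((h q).prod (h q')).symm))

lemma pi_smul_unit_equivalent (d : ι → F) :
    (QuadraticMap.pi fun i => d i • (unit : QF F).form).Equivalent (weightedSumSquares F d) :=
  ⟨⟨LinearEquiv.piCongrRight fun _ => LinearEquiv.funUnique (Fin 1) F F, fun x => by
    simp only [QuadraticMap.weightedSumSquares_apply, QuadraticMap.pi_apply, ← pow_two]
    exact Finset.sum_congr rfl fun i _ => congrArg (d i * ·) (unit_form_apply (x i)).symm⟩⟩

end Pi

section Similitudes

variable {W W' V V' : Type*} [AddCommGroup W] [Module F W] [AddCommGroup W'] [Module F W']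
  [AddCommGroup V] [Module F V] [AddCommGroup V'] [Module F V']

/-- Every value of `B` is the multiplier of a similitude of `Q`. The exchange property of the
similitudes is what makes this pass from `B`, `Q` to `⟨1, a⟩ ⊗ B`, `⟨1, a⟩ ⊗ Q`. -/
def HasSimilitudes (B : QuadraticForm F W) (Q : QuadraticForm F V) : Prop :=
  ∃ M : W → Module.End F V, (∀ x v, Q (M x v) = B x * Q v) ∧
    ∀ x y v w, polar Q (M x v) (M y w) = polar Q (M y v) (M x w)

variable {B : QuadraticForm F W} {B' : QuadraticForm F W'} {Q : QuadraticForm F V}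
  {Q' : QuadraticForm F V'}

namespace HasSimilitudes

lemma of_equivalent (h : HasSimilitudes B Q) (hB : B.Equivalent B') (hQ : Q.Equivalent Q') :
    HasSimilitudes B' Q' := by
  obtain ⟨M, hM, hMpolar⟩ := h
  obtain ⟨e⟩ := hB
  obtain ⟨e'⟩ := hQ
  refine ⟨fun x => e'.toLinearEquiv.conj (M (e.symm x)), fun x v => ?_, fun x y v w => ?_⟩
  · change Q' (e' _) = _
    rw [e'.map_app, hM]
    exact congrArg₂ _ (e.symm.map_app x) (e'.symm.map_app v)
  · change polar Q' (e' _) (e' _) = polar Q' (e' _) (e' _)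
    have he := polar_map_isometry (g := e'.toLinearEquiv.toLinearMap) e'.map_app
    exact (he _ _).trans ((hMpolar _ _ _ _).trans (he _ _).symm)

lemma prod_smul [CharP F 2] (h : HasSimilitudes B Q) (a : F) :
    HasSimilitudes (B.prod (a • B)) (Q.prod (a • Q)) := by
  obtain ⟨M, hM, hMpolar⟩ := h
  refine ⟨fun x => ((M x.1).coprod (a • M x.2)).prod ((M x.2).coprod (M x.1)), fun x v => ?_,
    fun x y v w => ?_⟩
  · have hcross := CharTwo.add_self_eq_zero (a * polar Q (M x.1 v.1) (M x.2 v.2))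
    change Q (M x.1 v.1 + a • M x.2 v.2) + a * Q (M x.2 v.1 + M x.1 v.2) =
      (B x.1 + a * B x.2) * (Q v.1 + a * Q v.2)
    simp only [QuadraticMap.map_add Q, QuadraticMap.map_smul, QuadraticMap.polar_smul_right, hM,
      hMpolar x.2 x.1, smul_eq_mul]
    linear_combination hcross
  · simp only [QuadraticMap.polar_prod, FunLike.coe_smul, QuadraticMap.polar_smul]
    change polar Q (M x.1 v.1 + a • M x.2 v.2) (M y.1 w.1 + a • M y.2 w.2) +
        a * polar Q (M x.2 v.1 + M x.1 v.2) (M y.2 w.1 + M y.1 w.2) =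
      polar Q (M y.1 v.1 + a • M y.2 v.2) (M x.1 w.1 + a • M x.2 w.2) +
        a * polar Q (M y.2 v.1 + M y.1 v.2) (M x.2 w.1 + M x.1 w.2)
    simp only [QuadraticMap.polar_add_left, QuadraticMap.polar_add_right,
      QuadraticMap.polar_smul_left, QuadraticMap.polar_smul_right, smul_eq_mul,
      hMpolar x.1 y.1, hMpolar x.2 y.2, hMpolar x.1 y.2, hMpolar x.2 y.1]
    ring

lemma hasLagrangian_prod_smul [FiniteDimensional F V] (h : HasSimilitudes B Q) {a : F} {x y : W}
    (hxy : B x + a * B y = 0) (hy : B y ≠ 0) : HasLagrangian (Q.prod (a • Q)) := by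
  obtain ⟨M, hM, -⟩ := h
  let g : V →ₗ[F] V × V := ((B y)⁻¹ • (M x ∘ₗ M y)).prod LinearMap.id
  refine ⟨LinearMap.range g, ?_, ?_⟩
  · rintro _ ⟨v, rfl⟩
    change Q ((B y)⁻¹ • M x (M y v)) + a * Q v = 0
    rw [QuadraticMap.map_smul, hM, hM]
    linear_combination (B y)⁻¹ * Q v * hxy +
      (B x * (B y)⁻¹ - a) * Q v * mul_inv_cancel₀ hy
  · rw [LinearMap.finrank_range_of_inj fun v w h => congrArg Prod.snd h, Module.finrank_prod]
    omega

end HasSimilitudes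

lemma hasSimilitudes_pfTensor [CharP F 2] (l : List F) (q : QF F) :
    HasSimilitudes (pfTensor l unit).form (pfTensor l q).form := by
  induction l with
  | nil =>
    refine ⟨fun x : Fin 1 → F => x 0 • LinearMap.id, fun x v => ?_, fun x y v w => ?_⟩
    · rw [LinearMap.smul_apply, LinearMap.id_apply, QuadraticMap.map_smul, ← pow_two]
      exact congrArg (· * _) (unit_form_apply x).symm
    · simp only [LinearMap.smul_apply, LinearMap.id_apply, QuadraticMap.polar_smul_left,
        QuadraticMap.polar_smul_right, smul_eq_mul]
      ring
  | cons a l ih =>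
    exact (ih.prod_smul a).of_equivalent (pfTensor_cons_equivalent a l _).symm
      (pfTensor_cons_equivalent a l q).symm

end Similitudes

lemma unit_form_anisotropic : (unit : QF F).form.Anisotropic := fun x hx =>
  funext fun i : Fin 1 => by
    rw [Subsingleton.elim i 0]
    exact pow_eq_zero_iff two_ne_zero |>.1 ((unit_form_apply x).symm.trans hx)

lemma hasLagrangian_pfTensor_of_not_anisotropic [CharP F 2] {l : List F}
    (h : ¬ (pfTensor l unit).form.Anisotropic) (q : QF F) : HasLagrangian (pfTensor l q).form := by
  induction l with
  | nil => exact (h unit_form_anisotropic).elim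
  | cons a l ih =>
    refine HasLagrangian.of_equivalent ?_ (pfTensor_cons_equivalent a l q).symm
    by_cases hl : (pfTensor l unit).form.Anisotropic
    swap
    · exact (ih hl).prod ((ih hl).smul a)
    obtain ⟨e⟩ := pfTensor_cons_equivalent a l unit
    simp only [QuadraticMap.Anisotropic, not_forall] at h
    obtain ⟨x, hx, hx0⟩ := h
    have hx : (pfTensor l unit).form (e x).1 + a * (pfTensor l unit).form (e x).2 = 0 :=
      (e.map_app x).trans hx
    refine (hasSimilitudes_pfTensor l q).hasLagrangian_prod_smul hx fun h2 => hx0 ?_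
    rw [h2, mul_zero, add_zero] at hx
    exact e.toLinearEquiv.map_eq_zero_iff.1 (Prod.ext (hl _ hx) (hl _ h2))

end Pfister

lemma exists_smul_eq_algebraMap_comp (R : Type*) {S ι : Type*} [Finite ι] [CommRing R]
    [IsDomain R] [Field S] [Algebra R S] [IsFractionRing R S] (w : ι → S) :
    ∃ (D : R) (p : ι → R), D ≠ 0 ∧ algebraMap R S D • w = algebraMap R S ∘ p := by
  obtain ⟨D, hD⟩ := IsLocalization.exist_integer_multiples_of_finite (nonZeroDivisors R) w
  choose p hp using hD
  exact ⟨D, p, nonZeroDivisors.ne_zero D.2, funext fun i => by simp [hp, Algebra.smul_def]⟩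

section CasselsPfister

open Polynomial

variable {k ι : Type*} [Field k] [Fintype ι] [DecidableEq ι] {M : Matrix ι ι k}

lemma natDegree_toQuadraticForm'_map_C_le {p : ι → k[X]} {m : ℕ}
    (hp : ∀ i, (p i).natDegree ≤ m) (M : Matrix ι ι k) :
    ((M.map C).toQuadraticForm' p).natDegree ≤ 2 * m := by
  rw [toQuadraticForm'_apply, two_mul]
  refine natDegree_sum_le_of_forall_le _ _ fun i _ =>
    natDegree_mul_le_of_le (hp i) (natDegree_sum_le_of_forall_le _ _ fun j _ => ?_)
  exact (natDegree_C_mul_le _ _).trans (hp j)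

lemma coeff_toQuadraticForm'_map_C {p : ι → k[X]} {m : ℕ} (hp : ∀ i, (p i).natDegree ≤ m)
    (M : Matrix ι ι k) :
    ((M.map C).toQuadraticForm' p).coeff (2 * m) = M.toQuadraticForm' fun i => (p i).coeff m := by
  have hMp (i : ι) : ((M.map C *ᵥ p) i).natDegree ≤ m :=
    natDegree_sum_le_of_forall_le _ _ fun j _ => (natDegree_C_mul_le _ _).trans (hp j)
  rw [toQuadraticForm'_apply, toQuadraticForm'_apply, two_mul, dotProduct, finsetSum_coeff]
  refine Finset.sum_congr rfl fun i _ => ?_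
  rw [coeff_mul_add_eq_of_natDegree_le (hp i) (hMp i)]
  simp [Matrix.mulVec, dotProduct]

lemma natDegree_le_of_anisotropic (hM : M.toQuadraticForm'.Anisotropic) {p : ι → k[X]} {m : ℕ}
    (hp : ((M.map C).toQuadraticForm' p).natDegree ≤ 2 * m) (i : ι) : (p i).natDegree ≤ m := by
  obtain ⟨j, -, hj⟩ := Finset.exists_max_image Finset.univ (fun i => (p i).natDegree) ⟨i, by simp⟩
  by_contra! hi
  have hmj : m < (p j).natDegree := hi.trans_le (hj i (Finset.mem_univ i))
  have hcoeff := coeff_toQuadraticForm'_map_C (fun i => hj i (Finset.mem_univ i)) M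
  rw [coeff_eq_zero_of_natDegree_lt (by lia)] at hcoeff
  have hlead : (p j).leadingCoeff = 0 := congrFun (hM _ hcoeff.symm) j
  rw [leadingCoeff_eq_zero.1 hlead] at hmj
  simp at hmj

lemma anisotropic_map_C (hM : M.toQuadraticForm'.Anisotropic) :
    (M.map (C : k →+* k[X])).toQuadraticForm'.Anisotropic := by
  intro p hp
  have hdeg := natDegree_le_of_anisotropic (m := 0) hM (by rw [hp]; simp)
  obtain ⟨v, rfl⟩ : ∃ v : ι → k, p = C ∘ v :=
    ⟨_, funext fun i => eq_C_of_natDegree_le_zero (hdeg i)⟩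
  rw [toQuadraticForm'_map_comp, C_eq_zero] at hp
  simp [hM v hp]

lemma anisotropic_map_algebraMap {R S : Type*} [CommRing R] [IsDomain R] [Field S] [Algebra R S]
    [IsFractionRing R S] {M : Matrix ι ι R} (hM : M.toQuadraticForm'.Anisotropic) :
    (M.map (algebraMap R S)).toQuadraticForm'.Anisotropic := by
  intro w hw
  obtain ⟨D, p, hD, hp⟩ := exists_smul_eq_algebraMap_comp R w
  have hQp : M.toQuadraticForm' p = 0 := by
    apply IsFractionRing.injective R S
    rw [← toQuadraticForm'_map_comp, ← hp, QuadraticMap.map_smul, hw, smul_zero, map_zero]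
  have hDw : algebraMap R S D • w = 0 := by
    rw [hp, hM p hQp]
    ext
    simp
  exact (smul_eq_zero.1 hDw).resolve_left (by simpa using hD)

/-- One step of the Cassels–Pfister descent: `Q p = g * D ^ 2` with `p = D • q + r` is replaced by a
solution with denominator `D'`, where `D * D' = Q r`. -/
lemma cassels_pfister_descent {R V : Type*} [CommRing R] [AddCommGroup V] [Module R V]
    (Q : QuadraticForm R V) {D g : R} {q r : V}
    (h : Q (D • q + r) = g * D ^ 2) : ∃ D' : R, D * D' = Q r ∧
      Q ((Q q - g) • r + D' • q) = g * D' ^ 2 := by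
  simp only [QuadraticMap.map_add Q, QuadraticMap.map_smul, QuadraticMap.polar_smul_left,
    QuadraticMap.polar_smul_right, smul_eq_mul] at h ⊢
  have hD' : D * (g * D - D * Q q - polar Q q r) = Q r := by linear_combination -h
  refine ⟨_, hD', ?_⟩
  rw [← hD', QuadraticMap.polar_comm Q r q]
  ring

theorem cassels_pfister (hM : M.toQuadraticForm'.Anisotropic) {g D : k[X]} (hD : D ≠ 0)
    {p : ι → k[X]} (hp : (M.map C).toQuadraticForm' p = g * D ^ 2) :
    ∃ w : ι → k[X], (M.map C).toQuadraticForm' w = g := by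
  obtain ⟨n, hn⟩ : ∃ n, D.natDegree = n := ⟨_, rfl⟩
  induction n using Nat.strong_induction_on generalizing D p with
  | _ n ih =>
  set Q := (M.map (C : k →+* k[X])).toQuadraticForm'
  obtain ⟨q, r, rfl, hr⟩ : ∃ q r : ι → k[X], p = D • q + r ∧ ∀ i, (r i).degree < D.degree :=
    ⟨fun i => p i / D, fun i => p i % D,
      funext fun i => (EuclideanDomain.div_add_mod (p i) D).symm,
      fun i => EuclideanDomain.mod_lt _ hD⟩
  by_cases hr0 : r = 0
  · refine ⟨q, mul_right_cancel₀ (pow_ne_zero 2 hD) ?_⟩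
    rw [← hp, hr0, add_zero, QuadraticMap.map_smul, smul_eq_mul]
    ring
  obtain ⟨D', hD', hp'⟩ := cassels_pfister_descent Q hp
  have hD'0 : D' ≠ 0 := by
    rintro rfl
    exact hr0 (anisotropic_map_C hM r (by rw [← hD', mul_zero]))
  refine ih _ ?_ hD'0 hp' rfl
  have hn0 : n ≠ 0 := by
    rintro rfl
    refine hr0 (funext fun i => degree_eq_bot.1 (Nat.WithBot.lt_zero_iff.1 ?_))
    simpa [degree_eq_natDegree hD, hn] using hr i
  have hrn (i : ι) : (r i).natDegree ≤ n - 1 := by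
    rcases eq_or_ne (r i) 0 with hi | hi
    · simp [hi]
    · exact Nat.le_sub_one_of_lt (hn ▸ natDegree_lt_natDegree hi (hr i))
  have hQr : (Q r).natDegree ≤ 2 * (n - 1) := natDegree_toQuadraticForm'_map_C_le hrn M
  rw [← hD', natDegree_mul hD hD'0, hn] at hQr
  lia

lemma anisotropic_map_ratFuncC (hM : M.toQuadraticForm'.Anisotropic) :
    (M.map (RatFunc.C : k →+* RatFunc k)).toQuadraticForm'.Anisotropic := by
  have := anisotropic_map_algebraMap (S := RatFunc k) (anisotropic_map_C hM)
  rwa [Matrix.map_map] at this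

theorem exists_of_toQuadraticForm'_eq_add_mul_X_sq (hM : M.toQuadraticForm'.Anisotropic)
    {w : ι → RatFunc k} {a b : k} (hw : (M.map RatFunc.C).toQuadraticForm' w =
      RatFunc.C a + RatFunc.C b * RatFunc.X ^ 2) :
    ∃ u v : ι → k, M.toQuadraticForm' u = a ∧ M.toQuadraticForm' v = b ∧
      polar M.toQuadraticForm' u v = 0 := by
  obtain ⟨D, p, hD, hp⟩ := exists_smul_eq_algebraMap_comp k[X] w
  have hQp : (M.map C).toQuadraticForm' p = (C a + C b * X ^ 2) * D ^ 2 := by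
    apply IsFractionRing.injective k[X] (RatFunc k)
    rw [← toQuadraticForm'_map_comp, ← hp, QuadraticMap.map_smul, Matrix.map_map]
    refine (congrArg _ hw).trans ?_
    simp only [smul_eq_mul, map_mul, map_add, map_pow, RatFunc.algebraMap_C, RatFunc.algebraMap_X]
    ring
  obtain ⟨w', hw'⟩ := cassels_pfister hM hD hQp
  have hdeg : ∀ i, (w' i).natDegree ≤ 1 := natDegree_le_of_anisotropic hM (by
    rw [hw']
    compute_degree)
  obtain ⟨u, v, rfl⟩ : ∃ u v : ι → k, w' = C ∘ u + (X : k[X]) • C ∘ v :=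
    ⟨_, _, funext fun i => by
      simpa [add_comm, mul_comm X] using eq_X_add_C_of_natDegree_le_one (hdeg i)⟩
  simp only [QuadraticMap.map_add (Matrix.toQuadraticForm' _), QuadraticMap.map_smul,
    QuadraticMap.polar_smul_right, toQuadraticForm'_map_comp, polar_toQuadraticForm'_map_comp,
    smul_eq_mul] at hw'
  refine ⟨u, v, ?_, ?_, ?_⟩
  · simpa [coeff_X] using congrArg (coeff · 0) hw'
  · simpa [coeff_X, ← pow_two] using congrArg (coeff · 2) hw'
  · simpa [← pow_two] using congrArg (coeff · 1) hw'

end CasselsPfister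

section Transcendental

section MapLin

variable {F E ι κ μ : Type*} [Field F] [Field E] [Fintype ι] [DecidableEq ι] [Fintype κ]
  [DecidableEq κ]

lemma mapLin_comp_add_comp [Fintype μ] [DecidableEq μ] (f : F →+* E)
    {A : (κ → F) →ₗ[F] (ι → F)} {B : (ι → F) →ₗ[F] (κ → F)} {C : (μ → F) →ₗ[F] (ι → F)}
    {D : (ι → F) →ₗ[F] (μ → F)} (h : A ∘ₗ B + C ∘ₗ D = LinearMap.id) (w : ι → E) :
    mapLin f A (mapLin f B w) + mapLin f C (mapLin f D w) = w := by
  suffices mapLin f A ∘ₗ mapLin f B + mapLin f C ∘ₗ mapLin f D = LinearMap.id from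
    LinearMap.congr_fun this w
  refine (Pi.basisFun E ι).ext fun i => ?_
  have hcomp (x y : ι → F) : (f ∘ x + f ∘ y : ι → E) = f ∘ (x + y) :=
    funext fun j => (map_add f _ _).symm
  change mapLin f A (mapLin f B _) + mapLin f C (mapLin f D _) = _
  simp only [basisFun_eq_comp f, mapLin_comp, hcomp]
  exact congrArg (f ∘ ·) (LinearMap.congr_fun h _)

lemma exists_mapLin_eq_of_mapLin_eq_zero [Finite μ] (f : F →+* E)
    {A : (κ → F) →ₗ[F] (ι → F)} (hA : Function.Injective A) {D : (ι → F) →ₗ[F] (μ → F)}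
    (hAD : LinearMap.range A = LinearMap.ker D) {w : ι → E} (hw : mapLin f D w = 0) :
    ∃ y, mapLin f A y = w := by
  classical
  cases nonempty_fintype μ
  obtain ⟨s, hs⟩ := D.rangeRestrict.exists_rightInverse_of_surjective D.range_rangeRestrict
  obtain ⟨C, hC⟩ := s.exists_extend
  obtain ⟨A', hA'⟩ := A.exists_leftInverse_of_injective (LinearMap.ker_eq_bot.2 hA)
  have hDC (x : ι → F) : D (C (D x)) = D x := by
    have := (congrArg D.rangeRestrict (LinearMap.congr_fun hC (D.rangeRestrict x))).trans
      (LinearMap.congr_fun hs _)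
    exact congrArg Subtype.val this
  have hsplit : A ∘ₗ A' ∘ₗ (LinearMap.id - C ∘ₗ D) + C ∘ₗ D = LinearMap.id := by
    refine LinearMap.ext fun x => ?_
    obtain ⟨y, hy⟩ : x - C (D x) ∈ LinearMap.range A := by simp [hAD, hDC]
    change A (A' (x - C (D x))) + C (D x) = x
    rw [← hy, show A' (A y) = y from LinearMap.congr_fun hA' y, hy, sub_add_cancel]
  exact ⟨_, by simpa only [hw, map_zero, add_zero] using mapLin_comp_add_comp f hsplit w⟩

lemma mapLin_pi_polarBilin {ν : Type*} (f : F →+* E) (Q : Matrix ι ι F) (v : ι → F) (w : ι → E) :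
    mapLin f (LinearMap.pi fun _ : ν => polarBilin Q.toQuadraticForm' v) w =
      fun _ => polar (Q.map f).toQuadraticForm' (f ∘ v) w := by
  suffices mapLin f (LinearMap.pi fun _ : ν => polarBilin Q.toQuadraticForm' v) =
      LinearMap.pi fun _ : ν => polarBilin (Q.map f).toQuadraticForm' (f ∘ v) from
    LinearMap.congr_fun this w
  refine (Pi.basisFun E ι).ext fun i => ?_
  rw [basisFun_eq_comp f, mapLin_comp]
  exact funext fun _ => (polar_toQuadraticForm'_map_comp f Q v _).symm

end MapLin

lemma exists_polar_eq_zero_of_anisotropic {k V : Type*} [Field k] [AddCommGroup V] [Module k V]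
    {Q : QuadraticForm k V} (hQ : Q.Anisotropic) {u v w : V} (hwv : Q w = Q v)
    (huw : polar Q u w = 0) : ∃ u', Q u' = Q u ∧ polar Q v u' = 0 := by
  by_cases hvw : v = w
  · exact ⟨u, rfl, by rw [hvw, QuadraticMap.polar_comm, huw]⟩
  have hsub (x y : V) : Q (x - y) = Q x + Q y - polar Q x y := by
    rw [sub_eq_add_neg, QuadraticMap.map_add Q, QuadraticMap.map_neg, QuadraticMap.polar_neg_right,
      sub_eq_add_neg]
  have hz : Q (v - w) ≠ 0 := fun h => hvw (sub_eq_zero.1 (hQ _ h))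
  have hvz : polar Q v (v - w) = Q (v - w) := by
    rw [hsub, QuadraticMap.polar_sub_right, QuadraticMap.polar_self, hwv, two_nsmul]
  have huz : polar Q u (v - w) = polar Q v u := by
    rw [QuadraticMap.polar_sub_right, huw, sub_zero, QuadraticMap.polar_comm]
  refine ⟨u - (polar Q v u / Q (v - w)) • (v - w), ?_, ?_⟩
  · rw [hsub, QuadraticMap.map_smul, QuadraticMap.polar_smul_right, huz]
    simp only [smul_eq_mul]
    field_simp
    ring
  · rw [QuadraticMap.polar_sub_right, QuadraticMap.polar_smul_right, hvz, smul_eq_mul,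
      div_mul_cancel₀ _ hz, sub_self]

/-- The properties of the rational function field `M = K(t₁, …, t_N)` on which the subform argument
relies: besides the algebraic independence of `t`, anisotropic forms stay anisotropic and represent
no new elements of `K`, and if one of them takes the value `a₁t₁² + ⋯ + a_Nt_N²`, then it represents
the `aₛ` at pairwise orthogonal vectors. -/
structure IsGenericExtension {K M : Type*} [Field K] [Field M] (f : K →+* M) {N : ℕ}
    (t : Fin N → M) : Prop where
  injective_eval₂Hom : Function.Injective (MvPolynomial.eval₂Hom f t)
  anisotropic_map {n : ℕ} {Q : Matrix (Fin n) (Fin n) K} (hQ : Q.toQuadraticForm'.Anisotropic) :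
    (Q.map f).toQuadraticForm'.Anisotropic
  exists_eq_of_map {n : ℕ} {Q : Matrix (Fin n) (Fin n) K} (hQ : Q.toQuadraticForm'.Anisotropic)
    {a : K} {w : Fin n → M} (hw : (Q.map f).toQuadraticForm' w = f a) :
    ∃ v, Q.toQuadraticForm' v = a
  exists_pairwise_polar_eq_zero {n : ℕ} {Q : Matrix (Fin n) (Fin n) K}
    (hQ : Q.toQuadraticForm'.Anisotropic) {a : Fin N → K} {w : Fin n → M}
    (hw : (Q.map f).toQuadraticForm' w = ∑ s, f (a s) * t s ^ 2) :
    ∃ v : Fin N → Fin n → K, (∀ s, Q.toQuadraticForm' (v s) = a s) ∧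
      Pairwise fun s s' => polar Q.toQuadraticForm' (v s) (v s') = 0

namespace IsGenericExtension

variable {K M : Type*} [Field K] [Field M] {f : K →+* M}

lemma of_fin_zero (K : Type*) [Field K] (t : Fin 0 → K) : IsGenericExtension (RingHom.id K) t where
  injective_eval₂Hom p q h := by
    rw [p.eq_C_of_isEmpty, q.eq_C_of_isEmpty] at h ⊢
    simpa using h
  anisotropic_map hQ := hQ
  exists_eq_of_map _ := fun hw => ⟨_, hw⟩
  exists_pairwise_polar_eq_zero _ := fun _ => ⟨nofun, nofun, nofun⟩

lemma injective_eval₂Hom_cons {N : ℕ} {t : Fin N → M}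
    (h : Function.Injective (MvPolynomial.eval₂Hom f t)) :
    Function.Injective (MvPolynomial.eval₂Hom ((RatFunc.C : M →+* RatFunc M).comp f)
      (Fin.cons RatFunc.X (RatFunc.C ∘ t))) := by
  have hfactor : MvPolynomial.eval₂Hom (RatFunc.C.comp f) (Fin.cons RatFunc.X (RatFunc.C ∘ t)) =
      ((algebraMap (Polynomial M) (RatFunc M)).comp
        (Polynomial.mapRingHom (MvPolynomial.eval₂Hom f t))).comp
          (MvPolynomial.finSuccEquiv K N : _ →+* _) := by
    refine MvPolynomial.ringHom_ext (fun r => ?_) fun i => ?_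
    · simp [MvPolynomial.finSuccEquiv_apply]
    · cases i using Fin.cases <;> simp [MvPolynomial.finSuccEquiv_apply]
  rw [hfactor]
  exact ((IsFractionRing.injective _ _).comp (Polynomial.map_injective _ h)).comp
    (MvPolynomial.finSuccEquiv K N).injective

/-- Restrict the form to the orthogonal complement of `v` and use genericity there. -/
lemma exists_pairwise_polar_eq_zero_of_polar_eq_zero {N n : ℕ} {t : Fin N → M}
    (h : IsGenericExtension f t) {Q : Matrix (Fin n) (Fin n) K}
    (hQ : Q.toQuadraticForm'.Anisotropic) {a : Fin N → K} {w : Fin n → M}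
    (hw : (Q.map f).toQuadraticForm' w = ∑ s, f (a s) * t s ^ 2) {v : Fin n → K}
    (hvw : polar (Q.map f).toQuadraticForm' (f ∘ v) w = 0) :
    ∃ u : Fin N → Fin n → K, (∀ s, Q.toQuadraticForm' (u s) = a s) ∧
      (∀ s, polar Q.toQuadraticForm' v (u s) = 0) ∧
      Pairwise fun s s' => polar Q.toQuadraticForm' (u s) (u s') = 0 := by
  let D : (Fin n → K) →ₗ[K] (Fin 1 → K) := LinearMap.pi fun _ => polarBilin Q.toQuadraticForm' v
  let b := Module.finBasis K (LinearMap.ker D)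
  let A := (LinearMap.ker D).subtype ∘ₗ b.equivFun.symm.toLinearMap
  have hA : Function.Injective A :=
    (LinearMap.ker D).injective_subtype.comp b.equivFun.symm.injective
  have hAD : LinearMap.range A = LinearMap.ker D := by
    rw [LinearMap.range_comp_of_range_eq_top _ b.equivFun.symm.range, Submodule.range_subtype]
  have hDw : mapLin f D w = 0 := by
    rw [mapLin_pi_polarBilin]
    exact funext fun _ => hvw
  obtain ⟨y, rfl⟩ := exists_mapLin_eq_of_mapLin_eq_zero f hA hAD hDw
  let R := LinearMap.toMatrix' A
  let Q' := Rᵀ * Q * R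
  have hQ' (x) : Q.toQuadraticForm' (A x) = Q'.toQuadraticForm' x := by
    rw [← LinearMap.toMatrix'_mulVec A, toQuadraticForm'_apply, toQuadraticForm'_apply,
      ← Matrix.mulVec_mulVec, ← Matrix.mulVec_mulVec, Matrix.dotProduct_mulVec x,
      Matrix.vecMul_transpose]
  have hQ'_anisotropic : Q'.toQuadraticForm'.Anisotropic := fun x hx =>
    hA ((hQ _ ((hQ' x).trans hx)).trans (map_zero A).symm)
  rw [toQuadraticForm'_mapLin f hQ'] at hw
  obtain ⟨u, hu, hpolar⟩ := h.exists_pairwise_polar_eq_zero hQ'_anisotropic hw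
  refine ⟨fun s => A (u s), fun s => (hQ' _).trans (hu s), fun s => ?_, fun s s' hs => ?_⟩
  · have : A (u s) ∈ LinearMap.ker D := hAD.le ⟨_, rfl⟩
    exact congrFun this 0
  · exact (polar_map_isometry hQ' _ _).trans (hpolar hs)

lemma ratFunc {N : ℕ} {t : Fin N → M} (h : IsGenericExtension f t) :
    IsGenericExtension ((RatFunc.C : M →+* RatFunc M).comp f)
      (Fin.cons RatFunc.X (RatFunc.C ∘ t) : Fin (N + 1) → RatFunc M) where
  injective_eval₂Hom := injective_eval₂Hom_cons h.injective_eval₂Hom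
  anisotropic_map hQ := anisotropic_map_ratFuncC (h.anisotropic_map hQ)
  exists_eq_of_map hQ a w hw := by
    obtain ⟨u, -, hu, -⟩ := exists_of_toQuadraticForm'_eq_add_mul_X_sq (a := f a) (b := 0)
      (h.anisotropic_map hQ) (hw.trans (by simp))
    exact h.exists_eq_of_map hQ hu
  exists_pairwise_polar_eq_zero {n Q} hQ {a w} hw := by
    obtain ⟨u, u', hu, hu', huu'⟩ := exists_of_toQuadraticForm'_eq_add_mul_X_sq
      (a := ∑ s, f (a s.succ) * t s ^ 2) (b := f (a 0)) (h.anisotropic_map hQ) (hw.trans (by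
        simp [Fin.sum_univ_succ, add_comm]))
    obtain ⟨v₀, hv₀⟩ := h.exists_eq_of_map hQ hu'
    obtain ⟨w', hw', hvw'⟩ := exists_polar_eq_zero_of_anisotropic (h.anisotropic_map hQ)
      (v := f ∘ v₀) (hu'.trans (by rw [toQuadraticForm'_map_comp, hv₀])) huu'
    obtain ⟨v, hv, hv₀v, hvv⟩ :=
      h.exists_pairwise_polar_eq_zero_of_polar_eq_zero hQ (hw'.trans hu) hvw'
    refine ⟨Fin.cons v₀ v, Fin.cases hv₀ hv, ?_⟩
    refine Fin.cases (Fin.cases (by simp) fun s' _ => hv₀v s') fun s => Fin.cases (fun _ => ?_)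
      fun s' hs => hvv fun hss => hs (congrArg _ hss)
    exact (QuadraticMap.polar_comm _ _ _).trans (hv₀v s)

end IsGenericExtension

lemma exists_isGenericExtension (K : Type u) [Field K] (N : ℕ) :
    ∃ (M : Type u) (_ : Field M) (f : K →+* M) (t : Fin N → M), IsGenericExtension f t := by
  induction N with
  | zero => exact ⟨K, _, _, nofun, .of_fin_zero K _⟩
  | succ N ih =>
    obtain ⟨M, _, f, t, h⟩ := ih
    exact ⟨_, _, _, _, h.ratFunc⟩

end Transcendental

section QuadraticExtension

open QuadraticAlgebra (omega)

variable {M ι : Type*} [Field M] [Fintype ι] [DecidableEq ι] {a : M}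

lemma re_toQuadraticForm'_map_algebraMap (Q : Matrix ι ι M) (x y : ι → M) :
    ((Q.map (algebraMap M (QuadraticAlgebra M a 0))).toQuadraticForm'
      (algebraMap M (QuadraticAlgebra M a 0) ∘ x +
        (omega : QuadraticAlgebra M a 0) • algebraMap M (QuadraticAlgebra M a 0) ∘ y)).re =
      Q.toQuadraticForm' x + a * Q.toQuadraticForm' y := by
  rw [QuadraticMap.map_add (Matrix.toQuadraticForm' _),
    QuadraticMap.map_smul, QuadraticMap.polar_smul_right, toQuadraticForm'_map_comp,
    toQuadraticForm'_map_comp, polar_toQuadraticForm'_map_comp]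
  simp

/-- The imaginary parts of a Lagrangian subspace fill the whole space, by anisotropy over `M` and
counting dimensions over `M`. -/
theorem exists_toQuadraticForm'_eq_neg_mul_of_hasLagrangian [Fact (∀ r : M, r ^ 2 ≠ a + 0 * r)]
    {Q : Matrix ι ι M} (hQ : Q.toQuadraticForm'.Anisotropic)
    (h : HasLagrangian (Q.map (algebraMap M (QuadraticAlgebra M a 0))).toQuadraticForm')
    (e : ι → M) : ∃ x, Q.toQuadraticForm' x = -(a * Q.toQuadraticForm' e) := by
  obtain ⟨U, hU, hdim⟩ := h
  let re (u : ι → QuadraticAlgebra M a 0) : ι → M := fun i => (u i).re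
  let im : U.restrictScalars M →ₗ[M] (ι → M) :=
    { toFun := fun u i => (u.1 i).im
      map_add' := fun _ _ => rfl
      map_smul' := fun _ _ => rfl }
  have hsplit (u : U.restrictScalars M) : algebraMap M (QuadraticAlgebra M a 0) ∘ re u +
      (omega : QuadraticAlgebra M a 0) • algebraMap M (QuadraticAlgebra M a 0) ∘ im u = u := by
    ext i <;> simp [re, im]
  have hre (u : U.restrictScalars M) :
      Q.toQuadraticForm' (re u) + a * Q.toQuadraticForm' (im u) = 0 := by
    rw [← re_toQuadraticForm'_map_algebraMap, hsplit, hU u u.2, QuadraticAlgebra.re_zero]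
  have him : Function.Injective im := (injective_iff_map_eq_zero im).2 fun u hu => by
    have hreu : re u = 0 := hQ _ (by simpa [hu] using hre u)
    exact Subtype.ext (by rw [← hsplit u, hu, hreu]; ext <;> simp)
  have hrange : LinearMap.range im = ⊤ := by
    refine Submodule.eq_top_of_finrank_eq (le_antisymm (Submodule.finrank_le _) ?_)
    have hdimU : finrank M (U.restrictScalars M) = 2 * finrank (QuadraticAlgebra M a 0) U := by
      rw [← QuadraticAlgebra.finrank_eq_two (R := M) a 0]
      exact (Module.finrank_mul_finrank M (QuadraticAlgebra M a 0) U).symm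
    rw [LinearMap.finrank_range_of_inj him, hdimU]
    simpa using hdim
  obtain ⟨u, rfl⟩ := LinearMap.range_eq_top.1 hrange e
  exact ⟨re u, eq_neg_of_add_eq_zero_left (hre u)⟩

end QuadraticExtension

section FunctionField

/-- The generic point of the quadric `q = 0`: the classes of the coordinates. -/
noncomputable def genericPoint {K : Type*} [Field K] (q : QF K) [IsDomain (CoordRing q)] :
    Fin q.dim → FunctionField q :=
  fun s => algebraMap (CoordRing q) _ (Ideal.Quotient.mk _ (MvPolynomial.X s))

section TotallySingular

lemma toQuadraticForm'_eq_sum_sq {R ι : Type*} [CommRing R] [CharP R 2] [Fintype ι] [DecidableEq ι]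
    {M : Matrix ι ι R} (hM : M + Mᵀ = 0) (x : ι → R) :
    M.toQuadraticForm' x = ∑ i, M i i * x i ^ 2 := by
  have hpolar (x y : ι → R) : polar (weightedSumSquares R M.diag) x y = 0 := by
    simp only [polar, QuadraticMap.weightedSumSquares_apply, ← Finset.sum_sub_distrib]
    exact Finset.sum_eq_zero fun i _ => by
      simp only [Pi.add_apply, CharTwo.add_mul_self, smul_add]
      ring
  suffices M.toQuadraticForm' = weightedSumSquares R M.diag by
    simp [this, QuadraticMap.weightedSumSquares_apply, pow_two]
  refine quadraticForm_ext_basis (Pi.basisFun R ι) (fun i => ?_) fun i j => ?_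
  · simp [toQuadraticForm'_apply, QuadraticMap.weightedSumSquares_apply, Pi.single_apply]
  · rw [hpolar, polar_toQuadraticForm', hM, Matrix.zero_mulVec, zero_dotProduct]

variable {K : Type*} [Field K] [CharP K 2] {q : QF K}

lemma TotallySingular.form_apply (hq : q.TotallySingular) (x : Fin q.dim → K) :
    q.form x = ∑ s, q.c s s * x s ^ 2 :=
  toQuadraticForm'_eq_sum_sq hq x

omit [CharP K 2] in
lemma TotallySingular.map {E : Type*} [Field E] (hq : q.TotallySingular) (g : K →+* E) :
    (q.map g).TotallySingular :=
  Matrix.ext fun i j =>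
    ((map_add g _ _).symm.trans (congrArg g (congrFun (congrFun hq i) j))).trans (map_zero g)

omit [CharP K 2] in
lemma TotallySingular.polar_form (hq : q.TotallySingular) (x y : Fin q.dim → K) :
    polar q.form x y = 0 := by
  rw [form, polar_toQuadraticForm', hq, Matrix.zero_mulVec, zero_dotProduct]

lemma form_single {K : Type*} [Field K] (q : QF K) (i : Fin q.dim) (θ : K) :
    q.form (Pi.single i θ) = q.c i i * θ ^ 2 := by
  simp only [form, toQuadraticForm'_apply, Matrix.mulVec_single, single_dotProduct, Pi.smul_apply,
    Matrix.col_apply, MulOpposite.smul_eq_mul_unop, MulOpposite.unop_op]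
  ring

lemma toPoly_eq_toQuadraticForm' {K : Type*} [Field K] (q : QF K) :
    q.toPoly = (q.c.map MvPolynomial.C).toQuadraticForm' MvPolynomial.X := by
  simp only [toPoly, toQuadraticForm'_apply, dotProduct, Matrix.mulVec, Finset.mul_sum]
  exact Finset.sum_congr rfl fun i _ => Finset.sum_congr rfl fun j _ => by
    rw [Matrix.map_apply]
    ring

lemma TotallySingular.toPoly_eq (hq : q.TotallySingular) :
    q.toPoly = ∑ s, MvPolynomial.C (q.c s s) * MvPolynomial.X s ^ 2 := by
  refine (toPoly_eq_toQuadraticForm' q).trans (toQuadraticForm'_eq_sum_sq ?_ _)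
  rw [← Matrix.transpose_map, ← Matrix.map_add _ (map_add _), hq, Matrix.map_zero _ (map_zero _)]

lemma eval₂Hom_toPoly {K E : Type*} [Field K] [Field E] (q : QF K) (g : K →+* E)
    (x : Fin q.dim → E) : MvPolynomial.eval₂Hom g x q.toPoly = (q.map g).form x := by
  rw [toPoly_eq_toQuadraticForm', ← toQuadraticForm'_map_comp, Matrix.map_map]
  have hC : MvPolynomial.eval₂Hom g x ∘ MvPolynomial.C = g := by ext; simp
  have hX : MvPolynomial.eval₂Hom g x ∘ MvPolynomial.X = x := by ext; simp
  rw [hC, hX]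
  rfl

end TotallySingular

section Embedding

variable {K E : Type*} [Field K] [Field E] [CharP K 2] {q : QF K}

/-- Modulo `q`, squares are polynomials in the coordinates other than `X i₀`. -/
lemma TotallySingular.exists_sq_sub_mem_span (hq : q.TotallySingular) {i₀ : Fin q.dim}
    (h₀ : q.c i₀ i₀ ≠ 0) (g : K →+* E) {x y : Fin q.dim → E} (hxy : ∀ s, s ≠ i₀ → x s = y s)
    (p : MvPolynomial (Fin q.dim) K) :
    ∃ r, p ^ 2 - r ∈ Ideal.span {q.toPoly} ∧
      MvPolynomial.eval₂Hom g x r = MvPolynomial.eval₂Hom g y r := by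
  let Y : Fin q.dim → MvPolynomial (Fin q.dim) K := Function.update (fun s => MvPolynomial.X s ^ 2)
    i₀ (∑ s ∈ Finset.univ.erase i₀,
      MvPolynomial.C ((q.c i₀ i₀)⁻¹ * q.c s s) * MvPolynomial.X s ^ 2)
  let h := MvPolynomial.eval₂Hom (MvPolynomial.C.comp (frobenius K 2)) Y
  have hY : MvPolynomial.X i₀ ^ 2 - Y i₀ = MvPolynomial.C (q.c i₀ i₀)⁻¹ * q.toPoly := by
    rw [hq.toPoly_eq, ← Finset.add_sum_erase _ _ (Finset.mem_univ i₀), mul_add, ← mul_assoc,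
      ← map_mul, inv_mul_cancel₀ h₀, map_one, one_mul, CharTwo.sub_eq_add, Finset.mul_sum]
    simp [Y, mul_assoc]
  have hfrob : (Ideal.Quotient.mk (Ideal.span {q.toPoly})).comp (frobenius _ 2) =
      (Ideal.Quotient.mk _).comp h := by
    refine MvPolynomial.ringHom_ext (fun r => by simp [h, frobenius_def]) fun s => ?_
    by_cases hs : s = i₀
    · subst hs
      refine (Ideal.Quotient.mk_eq_mk_iff_sub_mem _ _).2 ?_
      simpa [h, frobenius_def, hY] using
        Ideal.mul_mem_left _ _ (Ideal.mem_span_singleton_self q.toPoly)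
    · simp [h, Y, hs, frobenius_def]
  have heval : (MvPolynomial.eval₂Hom g x).comp h = (MvPolynomial.eval₂Hom g y).comp h := by
    refine MvPolynomial.ringHom_ext (fun r => by simp [h]) fun s => ?_
    by_cases hs : s = i₀
    · subst hs
      simp only [h, Y, RingHom.comp_apply, MvPolynomial.eval₂Hom_X', Function.update_self, map_sum,
        map_mul, map_pow]
      exact Finset.sum_congr rfl fun k hk => by
        simp only [hxy k (Finset.ne_of_mem_erase hk), MvPolynomial.eval₂Hom_C]
    · simp [h, Y, hs, hxy]
  exact ⟨h p, (Ideal.Quotient.mk_eq_mk_iff_sub_mem _ _).1 (RingHom.congr_fun hfrob p),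
    RingHom.congr_fun heval p⟩

lemma TotallySingular.ker_eval₂Hom_eq_radical (hq : q.TotallySingular) {i₀ : Fin q.dim}
    (h₀ : q.c i₀ i₀ ≠ 0) (g : K →+* E) {t x : Fin q.dim → E}
    (ht : Function.Injective (MvPolynomial.eval₂Hom g t)) (hx : ∀ s, s ≠ i₀ → x s = t s)
    (hqx : (q.map g).form x = 0) :
    RingHom.ker (MvPolynomial.eval₂Hom g x) = (Ideal.span {q.toPoly}).radical := by
  have hspan : Ideal.span {q.toPoly} ≤ RingHom.ker (MvPolynomial.eval₂Hom g x) := by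
    rw [Ideal.span_singleton_le_iff_mem, RingHom.mem_ker, eval₂Hom_toPoly, hqx]
  refine le_antisymm (fun p hp => ?_) (((RingHom.ker_isPrime _).radical_le_iff).2 hspan)
  obtain ⟨r, hr, hxr⟩ := hq.exists_sq_sub_mem_span h₀ g hx p
  have hr₀ : MvPolynomial.eval₂Hom g x r = 0 := by
    have := hspan hr
    rwa [RingHom.mem_ker, map_sub, map_pow, hp, zero_pow two_ne_zero, zero_sub,
      neg_eq_zero] at this
  have hr_zero : r = 0 := ht (by rw [← hxr, hr₀, map_zero])
  exact ⟨2, by rwa [hr_zero, sub_zero] at hr⟩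

/-- Another point of the quadric in `E` is generic as soon as all but one of its coordinates are
algebraically independent. -/
lemma TotallySingular.exists_functionField_ringHom [IsDomain (CoordRing q)]
    (hq : q.TotallySingular) {i₀ : Fin q.dim}
    (h₀ : q.c i₀ i₀ ≠ 0) (g : K →+* E) {t x : Fin q.dim → E}
    (ht : Function.Injective (MvPolynomial.eval₂Hom g t)) (hx : ∀ s, s ≠ i₀ → x s = t s)
    (hqx : (q.map g).form x = 0) :
    ∃ σ : FunctionField q →+* E, σ.comp (toFunctionField (F := K) q) = g ∧
      ∀ s, σ (genericPoint q s) = x s := by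
  have hker := hq.ker_eval₂Hom_eq_radical h₀ g ht hx hqx
  let σ₀ : CoordRing q →+* E := Ideal.Quotient.lift _ (MvPolynomial.eval₂Hom g x) fun p hp => by
    rwa [← hker] at hp
  have hσ₀ : Function.Injective σ₀ :=
    RingHom.lift_injective_of_ker_le_ideal _ _ hker.le
  refine ⟨IsFractionRing.lift hσ₀, RingHom.ext fun c => ?_, fun s => ?_⟩
  · refine (IsFractionRing.lift_algebraMap hσ₀ _).trans ?_
    exact MvPolynomial.eval₂_C _ _ _
  · refine (IsFractionRing.lift_algebraMap hσ₀ _).trans ?_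
    exact MvPolynomial.eval₂_X _ _ _

end Embedding

lemma form_map_genericPoint {K : Type*} [Field K] (q : QF K) [IsDomain (CoordRing q)] :
    (q.map (toFunctionField (F := K) q)).form (genericPoint q) = 0 := by
  have hX : MvPolynomial.eval₂Hom (toFunctionField (F := K) q) (genericPoint q) =
      (algebraMap (CoordRing q) (FunctionField q)).comp (Ideal.Quotient.mk _) :=
    MvPolynomial.ringHom_ext (fun _ => MvPolynomial.eval₂_C _ _ _) fun _ =>
      MvPolynomial.eval₂_X _ _ _
  have hq : q.toPoly ∈ (Ideal.span {q.toPoly}).radical :=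
    Ideal.le_radical (Ideal.mem_span_singleton_self _)
  rw [← eval₂Hom_toPoly, hX, RingHom.comp_apply, Ideal.Quotient.eq_zero_iff_mem.2 hq, map_zero]

end FunctionField

section GenericPoint

open QuadraticAlgebra (omega)

section MapLin

variable {F E M ι κ : Type*} [Field F] [Field E] [Field M] [Fintype ι] [DecidableEq ι]

lemma comp_mapLin (f : F →+* M) (σ : M →+* E) (g : (ι → F) →ₗ[F] (κ → F)) (x : ι → M) :
    σ ∘ mapLin f g x = mapLin (σ.comp f) g (σ ∘ x) := by
  ext i
  rw [mapLin, mapLin, Matrix.toLin'_apply, Matrix.toLin'_apply, RingHom.coe_comp,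
    ← Matrix.map_map, ← RingHom.map_mulVec]
  rfl

lemma mapLin_single (f : F →+* E) (g : (ι → F) →ₗ[F] (κ → F)) (i : ι) (c : E) :
    mapLin f g (Pi.single i c) = c • f ∘ g (Pi.single i 1) := by
  have hsingle : (Pi.single i c : ι → E) = c • f ∘ Pi.single i 1 := by
    ext j
    simp [Pi.single_apply, apply_ite f]
  rw [hsingle, map_smul, mapLin_comp]

omit [DecidableEq ι] in
lemma map_sum_smul_of_pairwise_polar_eq_zero {V : Type*} [AddCommGroup V] [Module F V]
    (Q : QuadraticForm F V) {v : ι → V} (hv : Pairwise fun s s' => polar Q (v s) (v s') = 0)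
    (x : ι → F) : Q (∑ s, x s • v s) = ∑ s, x s ^ 2 * Q (v s) := by
  classical
  rw [QuadraticMap.map_sum, Finset.sum_eq_zero (s := Finset.filter _ _), add_zero]
  · exact Finset.sum_congr rfl fun s _ => by rw [Q.map_smul, pow_two, smul_eq_mul]
  · refine Sym2.ind fun s s' hs => ?_
    have hne : s ≠ s' := by simpa using hs
    simp [QuadraticMap.polar_smul_left, QuadraticMap.polar_smul_right, hv hne]

end MapLin

lemma toQuadraticForm'_one_fin_one {R : Type*} [CommRing R] (x : Fin 1 → R) :
    (1 : Matrix (Fin 1) (Fin 1) R).toQuadraticForm' x = x 0 ^ 2 := by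
  simp [toQuadraticForm'_apply, dotProduct, pow_two]

variable {K M : Type*} [Field K] [CharP K 2] [Field M] {q : QF K} [IsDomain (CoordRing q)]
  {f : K →+* M} {t : Fin q.dim → M} {i₀ : Fin q.dim}

omit [CharP K 2] in
lemma IsGenericExtension.sq_ne_sum {N : ℕ} {t : Fin N → M} (h : IsGenericExtension f t)
    {d : Fin N → K} (hd : ¬ ∃ v : Fin N → K, ∀ s, d s = v s ^ 2) (m : M) :
    m ^ 2 ≠ ∑ s, f (d s) * t s ^ 2 := by
  have hanis : (1 : Matrix (Fin 1) (Fin 1) K).toQuadraticForm'.Anisotropic := fun x hx => by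
    rw [toQuadraticForm'_one_fin_one] at hx
    exact funext fun i => by rw [Subsingleton.elim i 0]; exact pow_eq_zero_iff two_ne_zero |>.1 hx
  intro hm
  obtain ⟨v, hv, -⟩ := h.exists_pairwise_polar_eq_zero hanis (a := d) (w := fun _ => m) <| by
    rw [Matrix.map_one f (map_zero f) (map_one f), toQuadraticForm'_one_fin_one, hm]
  exact hd ⟨fun s => v s 0, fun s => by rw [← hv, toQuadraticForm'_one_fin_one]⟩

/-- Adding to the `i₀`-th coordinate of `t` a square root of `q(t) / q.c i₀ i₀` gives a point of
the quadric. -/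
lemma TotallySingular.exists_functionField_ringHom_of_sq_eq {E : Type*} [Field E]
    (hq : q.TotallySingular) (h₀ : q.c i₀ i₀ ≠ 0) (h : IsGenericExtension f t) (g : M →+* E) {θ : E}
    (hθ : θ ^ 2 = g (∑ s, f (q.c s s / q.c i₀ i₀) * t s ^ 2)) :
    ∃ σ : FunctionField q →+* E, σ.comp (toFunctionField (F := K) q) = g.comp f ∧
      σ ∘ genericPoint q = g ∘ t + Pi.single i₀ θ := by
  have hE : CharP E 2 := ((g.comp f).charP_iff (g.comp f).injective 2).1 inferInstance
  have ht : Function.Injective (MvPolynomial.eval₂Hom (g.comp f) (g ∘ t)) := by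
    have hcomp : MvPolynomial.eval₂Hom (g.comp f) (g ∘ t) =
        g.comp (MvPolynomial.eval₂Hom f t) := by
      exact MvPolynomial.ringHom_ext (fun _ => by simp) fun _ => by simp
    rw [hcomp]
    exact g.injective.comp h.injective_eval₂Hom
  let x : Fin q.dim → E := g ∘ t + Pi.single i₀ θ
  have hx (s : Fin q.dim) (hs : s ≠ i₀) : x s = g (t s) := by simp [x, Pi.single_eq_of_ne hs]
  have hqx : (q.map (g.comp f)).form x = 0 := by
    have hc (s : Fin q.dim) :
        (g.comp f) (q.c i₀ i₀) * g (f (q.c s s / q.c i₀ i₀)) = (g.comp f) (q.c s s) := by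
      rw [← RingHom.comp_apply, ← map_mul, mul_div_cancel₀ _ h₀]
    have hgt : (q.map (g.comp f)).form (g ∘ t) = (g.comp f) (q.c i₀ i₀) * θ ^ 2 := by
      rw [hθ, map_sum, Finset.mul_sum]
      simp only [map_mul, map_pow, ← mul_assoc, hc]
      exact (hq.map (g.comp f)).form_apply (g ∘ t)
    have hsingle := form_single (q.map (g.comp f)) i₀ θ
    refine (QuadraticMap.map_add (q.map (g.comp f)).form (g ∘ t) (Pi.single i₀ θ)).trans ?_
    rw [(hq.map _).polar_form, add_zero, hgt, hsingle]
    exact CharTwo.add_self_eq_zero _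
  obtain ⟨σ, hσ, hσX⟩ := hq.exists_functionField_ringHom h₀ (g.comp f) ht hx hqx
  exact ⟨σ, hσ, funext hσX⟩

lemma TotallySingular.exists_functionField_ringHom_quadraticAlgebra (hq : q.TotallySingular)
    (h₀ : q.c i₀ i₀ ≠ 0) (hsq : ¬ ∃ v : Fin q.dim → K, ∀ s, q.c s s / q.c i₀ i₀ = v s ^ 2)
    (h : IsGenericExtension f t) :
    ∃ (d : M) (_ : Fact (∀ r : M, r ^ 2 ≠ d + 0 * r))
      (σ : FunctionField q →+* QuadraticAlgebra M d 0),
      d = ∑ s, f (q.c s s / q.c i₀ i₀) * t s ^ 2 ∧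
      σ.comp (toFunctionField (F := K) q) = (algebraMap M _).comp f ∧
      σ ∘ genericPoint q = algebraMap M (QuadraticAlgebra M d 0) ∘ t +
        Pi.single i₀ (omega : QuadraticAlgebra M d 0) := by
  set d := ∑ s, f (q.c s s / q.c i₀ i₀) * t s ^ 2
  have hd_fact : Fact (∀ r : M, r ^ 2 ≠ d + 0 * r) := ⟨fun r => by
    rw [zero_mul, add_zero]
    exact h.sq_ne_sum hsq r⟩
  obtain ⟨σ, hσ, hσX⟩ := hq.exists_functionField_ringHom_of_sq_eq h₀ h
    (algebraMap M (QuadraticAlgebra M d 0)) (θ := omega) <| by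
      rw [pow_two, QuadraticAlgebra.omega_mul_omega_eq_algebraMap, map_zero, zero_mul, add_zero]
  exact ⟨d, hd_fact, σ, rfl, hσ, hσX⟩

theorem TotallySingular.exists_linearMap_of_hasLagrangian_functionField (hq : q.TotallySingular)
    (h₀ : q.c i₀ i₀ ≠ 0) (hsq : ¬ ∃ v : Fin q.dim → K, ∀ s, q.c s s / q.c i₀ i₀ = v s ^ 2)
    {n : ℕ} {ρ : Matrix (Fin n) (Fin n) K} (hρ : ρ.toQuadraticForm'.Anisotropic)
    (h : HasLagrangian (ρ.map (toFunctionField (F := K) q)).toQuadraticForm') (e : Fin n → K) :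
    ∃ T : (Fin q.dim → K) →ₗ[K] (Fin n → K),
      ∀ x, ρ.toQuadraticForm' (T x) = ρ.toQuadraticForm' e / q.c i₀ i₀ * q.form x := by
  obtain ⟨M, _, f, t, hft⟩ := exists_isGenericExtension K q.dim
  have hM : CharP M 2 := (f.charP_iff f.injective 2).1 inferInstance
  obtain ⟨d, _, σ, hd, hσ, -⟩ := hq.exists_functionField_ringHom_quadraticAlgebra h₀ hsq hft
  have hlag := h.toQuadraticForm'_map σ
  rw [Matrix.map_map, ← RingHom.coe_comp, hσ, RingHom.coe_comp, ← Matrix.map_map] at hlag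
  obtain ⟨x, hx⟩ := exists_toQuadraticForm'_eq_neg_mul_of_hasLagrangian (hft.anisotropic_map hρ)
    hlag (f ∘ e)
  obtain ⟨v, hv, horth⟩ := hft.exists_pairwise_polar_eq_zero hρ (w := x)
    (a := fun s => q.c s s / q.c i₀ i₀ * ρ.toQuadraticForm' e) <| by
      rw [hx, CharTwo.neg_eq, toQuadraticForm'_map_comp, hd, Finset.sum_mul]
      exact Finset.sum_congr rfl fun s _ => by rw [map_mul]; ring
  refine ⟨Fintype.linearCombination K v, fun x => ?_⟩
  rw [Fintype.linearCombination_apply, map_sum_smul_of_pairwise_polar_eq_zero _ horth,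
    hq.form_apply, Finset.mul_sum]
  exact Finset.sum_congr rfl fun s _ => by rw [hv]; ring

lemma TotallySingular.eq_zero_of_hasLagrangian_functionField (hq : q.TotallySingular)
    (h₀ : q.c i₀ i₀ ≠ 0) (hsq : ∃ v : Fin q.dim → K, ∀ s, q.c s s / q.c i₀ i₀ = v s ^ 2)
    {n : ℕ} {ρ : Matrix (Fin n) (Fin n) K} (hρ : ρ.toQuadraticForm'.Anisotropic)
    (h : HasLagrangian (ρ.map (toFunctionField (F := K) q)).toQuadraticForm') : n = 0 := by
  obtain ⟨M, _, f, t, hft⟩ := exists_isGenericExtension K q.dim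
  have hM : CharP M 2 := (f.charP_iff f.injective 2).1 inferInstance
  obtain ⟨v, hv⟩ := hsq
  obtain ⟨σ, hσ, -⟩ := hq.exists_functionField_ringHom_of_sq_eq h₀ hft (RingHom.id M)
    (θ := ∑ s, f (v s) * t s) <| by
      simp only [CharTwo.sum_sq, mul_pow, hv, map_pow, RingHom.id_apply]
  obtain ⟨U, hU, hdim⟩ := h.toQuadraticForm'_map σ
  rw [Matrix.map_map, ← RingHom.coe_comp, hσ, RingHom.id_comp] at hU
  have hbot : U = ⊥ := (Submodule.eq_bot_iff U).2 fun x hx => hft.anisotropic_map hρ x (hU x hx)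
  rw [hbot, finrank_bot] at hdim
  simpa using hdim

lemma TotallySingular.not_anisotropic_map_toFunctionField (hq : q.TotallySingular)
    (h₀ : q.c i₀ i₀ ≠ 0) (hsq : ¬ ∃ v : Fin q.dim → K, ∀ s, q.c s s / q.c i₀ i₀ = v s ^ 2)
    {n : ℕ} {ρ : Matrix (Fin n) (Fin n) K} {π : (Fin q.dim → K) →ₗ[K] (Fin n → K)}
    (hπ : ∀ x, ρ.toQuadraticForm' (π x) = q.form x) :
    ¬ (ρ.map (toFunctionField (F := K) q)).toQuadraticForm'.Anisotropic := by
  intro hanis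
  have hX : mapLin (toFunctionField (F := K) q) π (genericPoint q) = 0 :=
    hanis _ ((toQuadraticForm'_mapLin _ hπ _).trans (form_map_genericPoint q))
  obtain ⟨M, _, f, t, hft⟩ := exists_isGenericExtension K q.dim
  obtain ⟨d, _, σ, -, hσ, hσX⟩ := hq.exists_functionField_ringHom_quadraticAlgebra h₀ hsq hft
  have hσπ := (comp_mapLin _ σ π (genericPoint q)).symm.trans (congrArg (σ ∘ ·) hX)
  rw [hσ, hσX, map_add, mapLin_single, ← comp_mapLin] at hσπ
  have hπ₀ : π (Pi.single i₀ 1) = 0 := funext fun j => f.injective <| by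
    simpa using congrArg QuadraticAlgebra.im (congrFun hσπ j)
  have := hπ (Pi.single i₀ 1)
  rw [hπ₀, QuadraticMap.map_zero, hq.form_apply] at this
  exact h₀ (by simpa [Pi.single_apply] using this.symm)

end GenericPoint

section Gluing

variable {K V W X : Type*} [Field K] [CharP K 2] [AddCommGroup V] [Module K V]
  [FiniteDimensional K V] [AddCommGroup W] [Module K W] [AddCommGroup X] [Module K X]
  [FiniteDimensional K X]

omit [FiniteDimensional K V] in
/-- In characteristic 2 the graph of an isometry between subspaces is isotropic. -/
lemma exists_isotropic_prod {Q : QuadraticForm K V} {P : QuadraticForm K W} {A : X →ₗ[K] V}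
    {B : X →ₗ[K] W} {u : V} {w : W} (hA : Function.Injective A) (hAB : ∀ x, Q (A x) = P (B x))
    (hAA : ∀ x y, polar Q (A x) (A y) = 0) (huw : Q u = P w)
    (hpolar : ∀ x, polar Q u (A x) = polar P w (B x)) {x₀ : X} (hx₀ : polar Q u (A x₀) ≠ 0) :
    ∃ U : Submodule K (V × W), (∀ z ∈ U, Q.prod P z = 0) ∧ finrank K U = finrank K X + 1 := by
  let T : X × K →ₗ[K] V × W :=
    ((A.coprod (LinearMap.toSpanSingleton K V u)).prod
      (B.coprod (LinearMap.toSpanSingleton K W w)))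
  have hT (x : X) (m : K) : T (x, m) = (A x + m • u, B x + m • w) := rfl
  refine ⟨LinearMap.range T, ?_, ?_⟩
  · rintro _ ⟨⟨x, m⟩, rfl⟩
    rw [hT, QuadraticMap.prod_apply, QuadraticMap.map_add Q, QuadraticMap.map_add P,
      QuadraticMap.map_smul, QuadraticMap.map_smul, QuadraticMap.polar_smul_right,
      QuadraticMap.polar_smul_right, QuadraticMap.polar_comm Q, QuadraticMap.polar_comm P,
      hpolar, hAB, huw]
    exact CharTwo.add_self_eq_zero _
  · have hTinj : Function.Injective T := by
      rw [← LinearMap.ker_eq_bot, LinearMap.ker_eq_bot']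
      rintro ⟨x, m⟩ hxm
      rw [hT, Prod.mk_eq_zero] at hxm
      have hm : m = 0 := by
        have hpair : polar Q (A x + m • u) (A x₀) = 0 := by
          rw [hxm.1, QuadraticMap.polar_zero_left]
        rw [QuadraticMap.polar_add_left, QuadraticMap.polar_smul_left, hAA, zero_add,
          smul_eq_mul] at hpair
        exact (mul_eq_zero.1 hpair).resolve_right hx₀
      have hx : x = 0 := by
        rw [← map_eq_zero_iff A hA]
        simpa only [hm, zero_smul, add_zero] using hxm.1
      rw [hx, hm, Prod.mk_zero_zero]
    rw [LinearMap.finrank_range_of_inj hTinj, Module.finrank_prod, Module.finrank_self]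

omit [FiniteDimensional K X] in
lemma IsNonsingular.exists_polar_eq_and_apply_eq {Q : QuadraticForm K V} (hQ : IsNonsingular Q)
    {t : X →ₗ[K] V} (ht : Function.Injective t) (htt : ∀ x y, polar Q (t x) (t y) = 0)
    {χ : Module.Dual K X} {e : X} (hχ : χ e = 1) :
    ∃ (u : V) (s : K), (∀ x, polar Q u (t x) = χ x) ∧ Q u = Q (t e) * s ^ 2 := by
  obtain ⟨r, hr⟩ := t.exists_leftInverse_of_injective (LinearMap.ker_eq_bot.2 ht)
  let v := (LinearMap.BilinForm.toDual (polarBilin Q) hQ.nondegenerate).symm (χ ∘ₗ r)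
  have hv (x : X) : polar Q v (t x) = χ x :=
    (LinearMap.BilinForm.apply_toDual_symm_apply (hB := hQ.nondegenerate) (χ ∘ₗ r) (t x)).trans
      (congrArg χ (LinearMap.congr_fun hr x))
  refine ⟨v + Q v • t e, Q v, fun x => ?_, ?_⟩
  · rw [QuadraticMap.polar_add_left, QuadraticMap.polar_smul_left, htt, smul_zero, add_zero, hv]
  · rw [QuadraticMap.map_add Q, QuadraticMap.map_smul, QuadraticMap.polar_smul_right, hv, hχ,
      smul_eq_mul, smul_eq_mul, mul_one]
    linear_combination CharTwo.add_self_eq_zero (Q v)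

lemma IsNonsingular.exists_isotropic_prod_pi_binForm {ι : Type*} [Fintype ι]
    {Q : QuadraticForm K V} (hQ : IsNonsingular Q) {d : ι → K} {i₀ : ι} (hd : d i₀ = 1) {a : K}
    {t : (ι → K) →ₗ[K] V} (ht : Function.Injective t)
    (hta : ∀ x, Q (t x) = a * weightedSumSquares K d x) :
    ∃ (s : K) (U : Submodule K (V × (ι → Fin 2 → K))),
      (∀ z ∈ U, Q.prod (QuadraticMap.pi fun i => d i • binForm a (a * s ^ 2)) z = 0) ∧
      finrank K U = Fintype.card ι + 1 := by
  classical
  have htt (x y : ι → K) : polar Q (t x) (t y) = 0 := by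
    rw [polar, ← _root_.map_add, hta, hta, hta]
    simp only [QuadraticMap.weightedSumSquares_apply, smul_eq_mul, Pi.add_apply, ← pow_two,
      CharTwo.add_sq, mul_add, Finset.sum_add_distrib]
    ring
  obtain ⟨u, s, hu, hQu⟩ := hQ.exists_polar_eq_and_apply_eq ht htt
    (χ := LinearMap.proj i₀) (e := Pi.single i₀ 1) (Pi.single_eq_same i₀ 1)
  let B : (ι → K) →ₗ[K] (ι → Fin 2 → K) :=
    LinearMap.pi fun i => (LinearMap.single K (fun _ : Fin 2 => K) 0) ∘ₗ LinearMap.proj i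
  let w : ι → Fin 2 → K := Pi.single i₀ ![0, 1]
  have hte : Q (t (Pi.single i₀ 1)) = a := by
    simp [hta, QuadraticMap.weightedSumSquares_apply, Pi.single_apply, hd]
  have hpolar (x : ι → K) : polar (QuadraticMap.pi fun i => d i • binForm a (a * s ^ 2)) w (B x) =
      x i₀ := by
    rw [QuadraticMap.Ring.polar_pi, Fintype.sum_eq_single i₀ fun i hi => ?_]
    · simp [polar_binForm, hd, w, B]
    · rw [show w i = 0 from Pi.single_eq_of_ne hi _, QuadraticMap.polar_zero_left]
  have hAB (x : ι → K) : Q (t x) =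
      (QuadraticMap.pi fun i => d i • binForm a (a * s ^ 2)) (B x) := by
    simp [hta, QuadraticMap.weightedSumSquares_apply, QuadraticMap.pi_apply, binForm_apply, B,
      Finset.mul_sum, mul_left_comm, ← pow_two]
  have huw : Q u = (QuadraticMap.pi fun i => d i • binForm a (a * s ^ 2)) w := by
    rw [hQu, hte, QuadraticMap.pi_apply_single]
    simp [hd, binForm_apply]
  obtain ⟨U, hU, hdim⟩ := exists_isotropic_prod ht hAB htt huw
    (fun x => (hu x).trans (hpolar x).symm) (x₀ := Pi.single i₀ 1) (by simp [hu])
  exact ⟨s, U, hU, by rwa [Module.finrank_fintype_fun_eq_card] at hdim⟩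

end Gluing

section Descent

variable {F K L : Type*} [Field F] [Field K] [Field L] {f : F →+* K} {l : List F}

lemma HasLagrangian.map_prod {q q' : QF F} (h : HasLagrangian (q.form.prod q'.form))
    (f : F →+* K) : HasLagrangian ((q.map f).form.prod (q'.map f).form) := by
  rw [← hasLagrangian_orthSum_iff, ← map_orthSum]
  exact (hasLagrangian_orthSum_iff.2 h).map f

lemma hasLagrangian_map_comp_of_prod {q q' : QF F} {g : K →+* L}
    (h : HasLagrangian ((q.map f).form.prod (q'.map f).form))
    (hq' : HasLagrangian (q'.map (g.comp f)).form) (hq : IsNonsingular q.form)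
    (hq'ns : IsNonsingular q'.form) : HasLagrangian (q.map (g.comp f)).form :=
  (h.map_prod g).cancel_right hq' ((isNonsingular_map_iff (g.comp f)).2 hq)
    ((isNonsingular_map_iff (g.comp f)).2 hq'ns)

lemma dim_pfTensor (l : List F) (q : QF F) : (pfTensor l q).dim = 2 ^ l.length * q.dim := by
  induction l with
  | nil => exact (one_mul _).symm
  | cons a l ih =>
    change (pfTensor l q).dim + (pfTensor l q).dim = _
    rw [ih, List.length_cons]
    ring

lemma hasLagrangian_prod_pfTensor_orthSum (hl : ∀ a ∈ l, a ≠ 0) {q β τ : QF F}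
    (h : HasLagrangian (((q.orthSum (pfTensor l β)).map f).form.prod
      ((pfTensor l τ).map f).form)) :
    HasLagrangian ((q.map f).form.prod ((pfTensor l (β.orthSum τ)).map f).form) := by
  rw [map_orthSum, map_pfTensor, map_pfTensor] at h
  rw [map_pfTensor, map_orthSum]
  have hl' : ∀ a ∈ l.map f, a ≠ 0 := by simpa using hl
  refine h.of_equivalent (((orthSum_equivalent _ _).prod (.refl _)).trans ?_)
  exact QuadraticMap.Equivalent.trans
    ⟨⟨LinearEquiv.prodAssoc K _ _ _, fun _ => (add_assoc _ _ _).symm⟩⟩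
    ((QuadraticMap.Equivalent.refl _).prod (pfTensor_orthSum_equivalent hl' _ _).symm)

lemma hasLagrangian_of_dim_eq_zero {q : QF F} (hq : q.dim = 0) : HasLagrangian q.form :=
  ⟨⊥, fun u hu => by rw [(Submodule.mem_bot F).1 hu, QuadraticMap.map_zero], by simp [hq]⟩

variable [CharP F 2]

lemma exists_anisotropic_map (hf : ∀ x, ∃ y, f y = x ^ 2) {φ : QF F}
    (hφ : IsNonsingular φ.form) :
    ∃ ψ : QF F, ψ.dim ≤ φ.dim ∧ IsNonsingular ψ.form ∧ (ψ.map f).form.Anisotropic ∧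
      HasLagrangian ((φ.map f).form.prod (ψ.map f).form) := by
  have : CharP K 2 := (f.charP_iff f.injective 2).1 inferInstance
  obtain ⟨n, hn⟩ : ∃ n, φ.dim = n := ⟨_, rfl⟩
  induction n using Nat.strong_induction_on generalizing φ with
  | h n ih =>
    by_cases han : (φ.map f).form.Anisotropic
    · exact ⟨φ, le_rfl, hφ, han, .prod_self _⟩
    obtain ⟨z, hz, hz0⟩ : ∃ z, (φ.map f).form z = 0 ∧ z ≠ 0 := by
      simpa [QuadraticMap.Anisotropic] using han
    have hspan : ∀ u ∈ Submodule.span K {z}, (φ.map f).form u = 0 := by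
      intro u hu
      obtain ⟨c, rfl⟩ := Submodule.mem_span_singleton.1 hu
      rw [QuadraticMap.map_smul, hz, smul_zero]
    obtain ⟨ψ, hdim, hψ, hlag⟩ :=
      exists_dim_add_two_mul_eq hf hφ hspan (finrank_span_singleton hz0).ge
    obtain ⟨χ, hχdim, hχ, hχan, hlag'⟩ := ih ψ.dim (by omega) hψ rfl
    have hN {q : QF F} (hq : IsNonsingular q.form) := (isNonsingular_map_iff f).2 hq
    exact ⟨χ, by omega, hχ, hχan, hlag.trans hlag' (hN hφ) (hN hψ) (hN hχ)⟩

lemma exists_isotropic_orthSum_pfTensor (hf : ∀ x, ∃ y, f y = x ^ 2) (hl : ∀ a ∈ l, a ≠ 0)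
    (hB : (pfTensor (l.map f) unit).form.Anisotropic) {ρ : QF F} (hρ : IsNonsingular ρ.form)
    {a : F} (ha : a ≠ 0)
    {T : (Fin (pfTensor (l.map f) unit).dim → K) →ₗ[K] (Fin (ρ.map f).dim → K)}
    (hT : ∀ x, (ρ.map f).form (T x) = f a * (pfTensor (l.map f) unit).form x) :
    ∃ (b : F) (U : Submodule K (Fin ((ρ.orthSum (pfTensor l (bin a b))).map f).dim → K)),
      (∀ z ∈ U, ((ρ.orthSum (pfTensor l (bin a b))).map f).form z = 0) ∧
      (pfTensor l (bin a b)).dim + 2 = 2 * finrank K U := by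
  have : CharP K 2 := (f.charP_iff f.injective 2).1 inferInstance
  have hl' : ∀ a ∈ l.map f, a ≠ 0 := by simpa using hl
  obtain ⟨ι, _, i₀, d, hd₀, -, hpi⟩ := exists_pfTensor_equivalent_pi hl'
  obtain ⟨e⟩ := (pi_smul_unit_equivalent d).symm.trans (hpi unit).symm
  have hinj : Function.Injective (T ∘ₗ e.toLinearMap) := by
    rw [← LinearMap.ker_eq_bot, LinearMap.ker_eq_bot']
    intro x hx
    have hTx := hT (e x)
    rw [show T (e x) = 0 from hx, QuadraticMap.map_zero, eq_comm, mul_eq_zero] at hTx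
    refine e.toLinearEquiv.map_eq_zero_iff.1 (hB _ (hTx.resolve_left ?_))
    rwa [_root_.map_eq_zero]
  obtain ⟨s, U, hU, hdim⟩ := IsNonsingular.exists_isotropic_prod_pi_binForm (a := f a)
    ((isNonsingular_map_iff f).2 hρ) hd₀ hinj
    (fun x => (hT (e x)).trans (congrArg (f a * ·) (e.map_app x)))
  obtain ⟨s', hs'⟩ := hf s
  let P := pfTensor l (bin a (a * s'))
  have hP : (P.map f).form.Equivalent
      (QuadraticMap.pi fun i => d i • binForm (f a) (f a * s ^ 2)) := by
    rw [map_pfTensor, map_bin, _root_.map_mul, hs']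
    exact hpi _
  have hsum : ((ρ.orthSum P).map f).form.Equivalent
      ((ρ.map f).form.prod (QuadraticMap.pi fun i => d i • binForm (f a) (f a * s ^ 2))) := by
    rw [map_orthSum]
    exact (orthSum_equivalent _ _).trans (.prod (.refl _) hP)
  obtain ⟨e'⟩ := hsum
  refine ⟨a * s', U.map e'.symm.toLinearMap, ?_, ?_⟩
  · rintro _ ⟨z, hz, rfl⟩
    exact (e'.symm.map_app z).trans (hU z hz)
  · have hcard := e.toLinearEquiv.finrank_eq
    rw [Module.finrank_fintype_fun_eq_card, Module.finrank_fin_fun, dim_pfTensor,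
      List.length_map] at hcard
    rw [LinearEquiv.finrank_map_eq e'.symm.toLinearEquiv, hdim, hcard, dim_pfTensor]
    change 2 ^ l.length * 2 + 2 = 2 * (2 ^ l.length * 1 + 1)
    ring

lemma exists_dim_lt_of_linearMap (hf : ∀ x, ∃ y, f y = x ^ 2) (hl : ∀ a ∈ l, a ≠ 0)
    (hB : (pfTensor (l.map f) unit).form.Anisotropic) {ρ : QF F} (hρ : IsNonsingular ρ.form)
    (han : (ρ.map f).form.Anisotropic) (hpos : 0 < ρ.dim)
    (hT : ∀ e, ∃ T : (Fin (pfTensor (l.map f) unit).dim → K) →ₗ[K] (Fin (ρ.map f).dim → K),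
      ∀ x, (ρ.map f).form (T x) = (ρ.map f).form e * (pfTensor (l.map f) unit).form x) :
    ∃ β ψ : QF F, ψ.dim < ρ.dim ∧ IsNonsingular β.form ∧ IsNonsingular ψ.form ∧
      HasLagrangian (((ρ.orthSum (pfTensor l β)).map f).form.prod (ψ.map f).form) := by
  let e : Fin ρ.dim → F := fun _ => 1
  have hρe : (ρ.map f).form (f ∘ e) = f (ρ.form e) := form_map_comp f ρ e
  have ha : ρ.form e ≠ 0 := fun h₀ => by
    have hfe : f ∘ e = 0 := han _ (hρe.trans ((congrArg f h₀).trans (_root_.map_zero f)))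
    exact one_ne_zero ((_root_.map_one f).symm.trans (congrFun hfe ⟨0, hpos⟩))
  obtain ⟨T, hT⟩ := hT (f ∘ e)
  obtain ⟨b, U, hU, hdim⟩ := exists_isotropic_orthSum_pfTensor hf hl hB hρ ha
    fun x => (hT x).trans (congrArg (· * _) hρe)
  have hβ : IsNonsingular (bin (ρ.form e) b).form := isNonsingular_binForm _ _
  obtain ⟨ψ, hψdim, hψ, hlag⟩ := exists_dim_add_two_mul_eq hf
    (isNonsingular_orthSum hρ (isNonsingular_pfTensor hl hβ)) hU le_rfl
  have hsumdim : (ρ.orthSum (pfTensor l (bin (ρ.form e) b))).dim =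
    ρ.dim + (pfTensor l (bin (ρ.form e) b)).dim := rfl
  exact ⟨_, ψ, by omega, hβ, hψ, hlag⟩

variable {g : K →+* L}

lemma exists_hasLagrangian_prod_pfTensor (hf : ∀ x, ∃ y, f y = x ^ 2) (hl : ∀ a ∈ l, a ≠ 0)
    (hB : (pfTensor (l.map f) unit).form.Anisotropic)
    (hsub : ∀ ρ : QF K, ρ.form.Anisotropic → HasLagrangian (ρ.map g).form → ∀ e,
      ∃ T : (Fin (pfTensor (l.map f) unit).dim → K) →ₗ[K] (Fin ρ.dim → K),
        ∀ x, ρ.form (T x) = ρ.form e * (pfTensor (l.map f) unit).form x)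
    (hlag : ∀ τ : QF F, HasLagrangian ((pfTensor l τ).map (g.comp f)).form)
    {ρ : QF F} (hρ : IsNonsingular ρ.form) (h : HasLagrangian (ρ.map (g.comp f)).form) :
    ∃ τ : QF F, IsNonsingular τ.form ∧
      HasLagrangian ((ρ.map f).form.prod ((pfTensor l τ).map f).form) := by
  have : CharP K 2 := (f.charP_iff f.injective 2).1 inferInstance
  have : CharP L 2 := (g.charP_iff g.injective 2).1 inferInstance
  have hN {q : QF F} (hq : IsNonsingular q.form) := (isNonsingular_map_iff f).2 hq
  obtain ⟨n, hn⟩ : ∃ n, ρ.dim = n := ⟨_, rfl⟩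
  induction n using Nat.strong_induction_on generalizing ρ with
  | h n ih =>
    obtain ⟨ρ₀, hdim, hρ₀, han, hρρ₀⟩ := exists_anisotropic_map hf hρ
    have h₀ := hasLagrangian_map_comp_of_prod hρρ₀.prod_symm h hρ₀ hρ
    obtain hzero | hpos := Nat.eq_zero_or_pos ρ₀.dim
    · have hnil : IsNonsingular (nil : QF F).form := fun x _ =>
        Subsingleton.elim (α := Fin 0 → F) x 0
      have hpf : ((pfTensor l nil).map f).dim = 0 := dim_pfTensor l nil
      refine ⟨nil, hnil, hρρ₀.trans ?_ (hN hρ) (hN hρ₀) (hN (isNonsingular_pfTensor hl hnil))⟩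
      exact (hasLagrangian_of_dim_eq_zero (q := ρ₀.map f) hzero).prod
        (hasLagrangian_of_dim_eq_zero hpf)
    obtain ⟨β, ψ, hψdim, hβ, hψ, hρ₀ψ⟩ :=
      exists_dim_lt_of_linearMap hf hl hB hρ₀ han hpos (hsub _ han h₀)
    have hsum := isNonsingular_orthSum hρ₀ (isNonsingular_pfTensor hl hβ)
    have hsumL : HasLagrangian ((ρ₀.orthSum (pfTensor l β)).map (g.comp f)).form := by
      rw [map_orthSum, hasLagrangian_orthSum_iff]
      exact h₀.prod (hlag β)
    obtain ⟨τ, hτ, hψτ⟩ := ih ψ.dim (by omega) hψ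
      (hasLagrangian_map_comp_of_prod hρ₀ψ.prod_symm hsumL hψ hsum) rfl
    have hβτ := isNonsingular_orthSum hβ hτ
    refine ⟨_, hβτ, hρρ₀.trans ?_ (hN hρ) (hN hρ₀) (hN (isNonsingular_pfTensor hl hβτ))⟩
    exact hasLagrangian_prod_pfTensor_orthSum hl
      (hρ₀ψ.trans hψτ (hN hsum) (hN hψ) (hN (isNonsingular_pfTensor hl hτ)))

end Descent

section Kernel

variable {K : Type u} [Field K] [CharP K 2] {φ q : QF K} {l : List K}

lemma AnisoPartOf.exists_isometries (h : AnisoPartOf φ q) (hq : q.TotallySingular) :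
    ∃ (ι : (Fin φ.dim → K) →ₗ[K] (Fin q.dim → K)) (π : (Fin q.dim → K) →ₗ[K] (Fin φ.dim → K)),
      (∀ x, q.form (ι x) = φ.form x) ∧ ∀ x, φ.form (π x) = q.form x := by
  obtain ⟨-, k, m, hiso⟩ := h
  have hequiv : q.form.Equivalent
      ((hyp k).form.prod (φ.form.prod (0 : QuadraticForm K (Fin m → K)))) := by
    rw [← form_zeros]
    exact ((isometric_iff.1 hiso).trans (orthSum_equivalent _ _)).trans
      ((QuadraticMap.Equivalent.refl _).prod (orthSum_equivalent _ _))
  obtain ⟨e⟩ := hequiv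
  have hhyp (x : Fin q.dim → K) : (e x).1 = 0 := by
    refine isNonsingular_hyp k _ fun y => ?_
    have hpolar := hq.polar_form x (e.symm (y, 0))
    rw [← polar_map_isometry (g := e.toLinearMap) e.map_app] at hpolar
    simpa using hpolar
  refine ⟨e.symm.toLinearMap ∘ₗ LinearMap.inr K _ _ ∘ₗ LinearMap.inl K _ _,
    LinearMap.fst K _ _ ∘ₗ LinearMap.snd K _ _ ∘ₗ e.toLinearMap, fun x => ?_, fun x => ?_⟩
  · refine (e.symm.map_app _).trans ?_
    simp
  · rw [← e.map_app x, QuadraticMap.prod_apply, QuadraticMap.prod_apply, hhyp]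
    simp

lemma TotallySingular.exists_c_ne_zero (hq : q.TotallySingular) {x : Fin q.dim → K}
    (hx : q.form x ≠ 0) : ∃ i, q.c i i ≠ 0 := by
  by_contra! h
  exact hx (by simp [hq.form_apply, h])

lemma TotallySingular.not_exists_sq (hq : q.TotallySingular) (hφ : φ.form.Anisotropic)
    (hdim : 1 < φ.dim) {ι : (Fin φ.dim → K) →ₗ[K] (Fin q.dim → K)}
    (hι : ∀ x, q.form (ι x) = φ.form x) {c : K} (hc : c ≠ 0) :
    ¬ ∃ v : Fin q.dim → K, ∀ s, q.c s s / c = v s ^ 2 := by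
  rintro ⟨v, hv⟩
  let χ : (Fin q.dim → K) →ₗ[K] K := Fintype.linearCombination K v
  have hχ (x : Fin q.dim → K) : q.form x = c * χ x ^ 2 := by
    rw [hq.form_apply, Fintype.linearCombination_apply, CharTwo.sum_sq, Finset.mul_sum]
    refine Finset.sum_congr rfl fun s _ => ?_
    rw [(div_eq_iff hc).1 (hv s), smul_eq_mul]
    ring
  obtain ⟨x, hx, hx0⟩ := (LinearMap.ker (χ ∘ₗ ι)).ne_bot_iff.1
    (LinearMap.ker_ne_bot_of_finrank_lt (by simpa using hdim))
  refine hx0 (hφ x ?_)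
  rw [← hι, hχ, show χ (ι x) = 0 from hx, zero_pow two_ne_zero, mul_zero]

omit [CharP K 2] in
lemma AnisoPartOf.anisotropic (h : AnisoPartOf φ q) : φ.form.Anisotropic := fun x hx =>
  h.1 x ((form_apply φ x).symm.trans hx)

lemma TotallySingular.exists_c_ne_zero_of_anisoPartOf (hq : q.TotallySingular)
    (hB : AnisoPartOf (pfTensor l unit) q) : ∃ i, q.c i i ≠ 0 := by
  obtain ⟨ι, -, hι, -⟩ := hB.exists_isometries hq
  have hpos : 0 < (pfTensor l (unit : QF K)).dim := by
    rw [dim_pfTensor]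
    exact Nat.mul_pos (Nat.two_pow_pos _) Nat.one_pos
  refine hq.exists_c_ne_zero (x := ι 1) fun h₀ => ?_
  exact one_ne_zero (congrFun (hB.anisotropic 1 ((hι 1).symm.trans h₀)) ⟨0, hpos⟩)

lemma TotallySingular.not_exists_sq_of_anisoPartOf (hq : q.TotallySingular)
    (hB : AnisoPartOf (pfTensor l unit) q) (hl : l ≠ []) {c : K} (hc : c ≠ 0) :
    ¬ ∃ v : Fin q.dim → K, ∀ s, q.c s s / c = v s ^ 2 := by
  obtain ⟨ι, -, hι, -⟩ := hB.exists_isometries hq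
  refine hq.not_exists_sq hB.anisotropic ?_ hι hc
  rw [dim_pfTensor]
  exact (Nat.one_lt_two_pow (List.length_pos_iff.2 hl).ne').trans_eq (mul_one _).symm

variable [IsDomain (CoordRing q)]

/-- Writing `c₀` for a nonzero diagonal coefficient of `q`, the form `ρ(e) / c₀ • q` is a subform
of `ρ`; the factor `1 / c₀` disappears because `c₀` is a value of `⟨⟨l⟩⟩`, hence a similarity
factor of it. -/
lemma AnisoPartOf.exists_linearMap_of_hasLagrangian_functionField
    (hB : AnisoPartOf (pfTensor l unit) q) (hq : q.TotallySingular) (hl : l ≠ []) {ρ : QF K}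
    (hρ : ρ.form.Anisotropic) (h : HasLagrangian (ρ.map (toFunctionField (F := K) q)).form)
    (e : Fin ρ.dim → K) :
    ∃ T : (Fin (pfTensor l unit).dim → K) →ₗ[K] (Fin ρ.dim → K),
      ∀ x, ρ.form (T x) = ρ.form e * (pfTensor l unit).form x := by
  obtain ⟨i₀, h₀⟩ := hq.exists_c_ne_zero_of_anisoPartOf hB
  obtain ⟨ι, π, hι, hπ⟩ := hB.exists_isometries hq
  obtain ⟨T, hT⟩ := hq.exists_linearMap_of_hasLagrangian_functionField h₀
    (hq.not_exists_sq_of_anisoPartOf hB hl h₀) hρ h e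
  obtain ⟨M, hM, -⟩ := hasSimilitudes_pfTensor l (unit : QF K)
  refine ⟨T ∘ₗ ι ∘ₗ M (π (Pi.single i₀ 1)), fun x => (hT _).trans ?_⟩
  rw [LinearMap.comp_apply, hι, hM, hπ, form_single, one_pow, mul_one, ← mul_assoc,
    div_mul_cancel₀ _ h₀]
  rfl

lemma AnisoPartOf.hasLagrangian_map_pfTensor (hB : AnisoPartOf (pfTensor l unit) q)
    (hq : q.TotallySingular) (hl : l ≠ []) (τ : QF K) :
    HasLagrangian ((pfTensor l τ).map (toFunctionField (F := K) q)).form := by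
  have : CharP (FunctionField q) 2 :=
    ((toFunctionField (F := K) q).charP_iff (RingHom.injective _) 2).1 inferInstance
  obtain ⟨i₀, h₀⟩ := hq.exists_c_ne_zero_of_anisoPartOf hB
  obtain ⟨-, π, -, hπ⟩ := hB.exists_isometries hq
  have hiso : ¬ ((pfTensor l unit).map (toFunctionField (F := K) q)).form.Anisotropic :=
    hq.not_anisotropic_map_toFunctionField h₀ (hq.not_exists_sq_of_anisoPartOf hB hl h₀) hπ
  rw [map_pfTensor, QF.map_unit] at hiso
  rw [map_pfTensor]
  exact hasLagrangian_pfTensor_of_not_anisotropic hiso _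

lemma AnisoPartOf.dim_eq_zero_of_hasLagrangian_functionField (hB : AnisoPartOf unit q)
    (hq : q.TotallySingular) {ρ : QF K} (hρ : ρ.form.Anisotropic)
    (h : HasLagrangian (ρ.map (toFunctionField (F := K) q)).form) : ρ.dim = 0 := by
  obtain ⟨i₀, h₀⟩ := hq.exists_c_ne_zero_of_anisoPartOf (l := []) hB
  obtain ⟨-, π, -, hπ⟩ := hB.exists_isometries hq
  let r (s : Fin q.dim) : K := π (Pi.single s 1) (0 : Fin 1)
  have hc (s : Fin q.dim) : q.c s s = r s ^ 2 := by
    rw [← mul_one (q.c s s), ← one_pow (M := K) 2, ← form_single, ← hπ]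
    exact unit_form_apply _
  refine hq.eq_zero_of_hasLagrangian_functionField h₀ ⟨fun s => r s / r i₀, fun s => ?_⟩ hρ h
  rw [hc s, hc i₀, div_pow]

end Kernel

section WittKernel

variable {F : Type*} [Field F]

lemma TotallySingular.orthSum {q q' : QF F} (hq : q.TotallySingular) (hq' : q'.TotallySingular) :
    (q.orthSum q').TotallySingular := by
  have hblocks : Matrix.fromBlocks q.c 0 0 q'.c + (Matrix.fromBlocks q.c 0 0 q'.c)ᵀ = 0 := by
    simp [Matrix.fromBlocks_transpose, Matrix.fromBlocks_add, show q.c + q.cᵀ = 0 from hq,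
      show q'.c + q'.cᵀ = 0 from hq']
  exact congrArg (Matrix.reindex finSumFinEquiv finSumFinEquiv) hblocks

lemma TotallySingular.smul {q : QF F} (hq : q.TotallySingular) (a : F) :
    (q.smul a).TotallySingular := by
  change a • q.c + (a • q.c)ᵀ = 0
  rw [Matrix.transpose_smul, ← smul_add, show q.c + q.cᵀ = 0 from hq, smul_zero]

lemma TotallySingular.pfTensor {q : QF F} (hq : q.TotallySingular) (l : List F) :
    (pfTensor l q).TotallySingular := by
  induction l with
  | nil => exact hq
  | cons a l ih => exact ih.orthSum (ih.smul a)

variable [CharP F 2]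

lemma totallySingular_diag {n : ℕ} (v : Fin n → F) : (diag v).TotallySingular := by
  have h : Matrix.diagonal v + (Matrix.diagonal v)ᵀ = 0 := by
    simp only [Matrix.diagonal_transpose, Matrix.diagonal_add, CharTwo.add_self_eq_zero,
      Matrix.diagonal_zero]
  exact h

lemma wittEquiv_orthSum_self_orthSum {φ ψ : QF F} (hφ : IsNonsingular φ.form)
    (hψ : IsNonsingular ψ.form) : WittEquiv φ ((φ.orthSum ψ).orthSum ψ) := by
  rw [wittEquiv_iff hφ (isNonsingular_orthSum (isNonsingular_orthSum hφ hψ) hψ)]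
  refine ((HasLagrangian.prod_self φ.form).prod (HasLagrangian.prod_self ψ.form)).of_equivalent ?_
  have hassoc : ((φ.form.prod φ.form).prod (ψ.form.prod ψ.form)).Equivalent
      (φ.form.prod ((φ.form.prod ψ.form).prod ψ.form)) :=
    ⟨⟨(LinearEquiv.prodAssoc F _ _ _).trans
      ((LinearEquiv.refl F _).prodCongr (LinearEquiv.prodAssoc F _ _ _).symm), fun x => by
        change φ.form x.1.1 + (φ.form x.1.2 + ψ.form x.2.1 + ψ.form x.2.2) = _
        rw [add_assoc, ← add_assoc (φ.form x.1.1)]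
        rfl⟩⟩
  exact hassoc.trans ((QuadraticMap.Equivalent.refl _).prod
    (((orthSum_equivalent φ ψ).symm.prod (.refl _)).trans (orthSum_equivalent _ _).symm))

section Comp

variable {K L : Type*} [Field K] [Field L] {f : F →+* K} {g : K →+* L} {l : List F} {φ : QF F}

theorem hyperbolic_map_comp_iff (hf : ∀ x, ∃ y, f y = x ^ 2)
    (hzero : ∀ ρ : QF K, ρ.form.Anisotropic → HasLagrangian (ρ.map g).form → ρ.dim = 0)
    (hφ : φ.Nonsingular) : Hyperbolic (φ.map (g.comp f)) ↔ Hyperbolic (φ.map f) := by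
  have : CharP K 2 := (f.charP_iff f.injective 2).1 inferInstance
  have : CharP L 2 := (g.charP_iff g.injective 2).1 inferInstance
  rw [nonsingular_iff] at hφ
  have hφf := (isNonsingular_map_iff f).2 hφ
  rw [hyperbolic_iff ((isNonsingular_map_iff (g.comp f)).2 hφ), hyperbolic_iff hφf]
  refine ⟨fun h => ?_, fun h => h.map g⟩
  obtain ⟨ψ, -, hψ, han, hφψ⟩ := exists_anisotropic_map hf hφ
  have hψL := hasLagrangian_map_comp_of_prod hφψ.prod_symm h hψ hφ
  exact hφψ.cancel_right (hasLagrangian_of_dim_eq_zero (hzero _ han hψL)) hφf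
    ((isNonsingular_map_iff f).2 hψ)

theorem hyperbolic_map_comp_iff_exists_wittEquiv (hf : ∀ x, ∃ y, f y = x ^ 2)
    (hl : ∀ a ∈ l, a ≠ 0) (hB : (pfTensor (l.map f) unit).form.Anisotropic)
    (hsub : ∀ ρ : QF K, ρ.form.Anisotropic → HasLagrangian (ρ.map g).form → ∀ e,
      ∃ T : (Fin (pfTensor (l.map f) unit).dim → K) →ₗ[K] (Fin ρ.dim → K),
        ∀ x, ρ.form (T x) = ρ.form e * (pfTensor (l.map f) unit).form x)
    (hlag : ∀ τ : QF F, HasLagrangian ((pfTensor l τ).map (g.comp f)).form)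
    (hφ : φ.Nonsingular) :
    Hyperbolic (φ.map (g.comp f)) ↔
      ∃ ψ τ : QF F, ψ.Nonsingular ∧ Hyperbolic (ψ.map f) ∧ τ.Nonsingular ∧
        WittEquiv φ (ψ.orthSum (pfTensor l τ)) := by
  have : CharP K 2 := (f.charP_iff f.injective 2).1 inferInstance
  have : CharP L 2 := (g.charP_iff g.injective 2).1 inferInstance
  rw [nonsingular_iff] at hφ
  rw [hyperbolic_iff ((isNonsingular_map_iff (g.comp f)).2 hφ)]
  constructor
  · intro h
    obtain ⟨τ, hτ, hφτ⟩ := exists_hasLagrangian_prod_pfTensor hf hl hB hsub hlag hφ h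
    have hP := isNonsingular_pfTensor hl hτ
    have hsum := isNonsingular_orthSum hφ hP
    refine ⟨φ.orthSum (pfTensor l τ), τ, nonsingular_iff.2 hsum, ?_, nonsingular_iff.2 hτ,
      wittEquiv_orthSum_self_orthSum hφ hP⟩
    rw [hyperbolic_iff ((isNonsingular_map_iff f).2 hsum), map_orthSum]
    exact hasLagrangian_orthSum_iff.2 hφτ
  · rintro ⟨ψ, τ, hψ, hψf, hτ, hW⟩
    rw [nonsingular_iff] at hψ hτ
    rw [hyperbolic_iff ((isNonsingular_map_iff f).2 hψ)] at hψf
    have hsum := isNonsingular_orthSum hψ (isNonsingular_pfTensor hl hτ)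
    refine hasLagrangian_map_comp_of_prod (((wittEquiv_iff hφ hsum).1 hW).map_prod f) ?_ hφ hsum
    rw [map_orthSum, hasLagrangian_orthSum_iff]
    exact (hψf.map g).prod (hlag τ)

end Comp

variable {K : Type u} [Field K] [Algebra F K] {q : QF K} [IsDomain (CoordRing q)] {l : List F}
  {φ : QF F}

theorem hyperbolic_map_toFunctionField_iff_of_anisoPartOf_unit
    (hK : ∀ x : K, ∃ y : F, algebraMap F K y = x ^ 2) (hq : q.TotallySingular)
    (hB : AnisoPartOf unit q) (hφ : φ.Nonsingular) :
    Hyperbolic (φ.map (toFunctionField (F := F) q)) ↔ Hyperbolic (φ.map (algebraMap F K)) := by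
  have : CharP K 2 := ((algebraMap F K).charP_iff (RingHom.injective _) 2).1 inferInstance
  exact hyperbolic_map_comp_iff (g := toFunctionField (F := K) q) hK
    (fun _ => hB.dim_eq_zero_of_hasLagrangian_functionField hq) hφ

theorem hyperbolic_map_toFunctionField_iff_of_anisoPartOf_pfTensor
    (hK : ∀ x : K, ∃ y : F, algebraMap F K y = x ^ 2) (hl : ∀ a ∈ l, a ≠ 0) (hne : l ≠ [])
    (hq : q.TotallySingular) (hB : AnisoPartOf ((pfTensor l unit).map (algebraMap F K)) q)
    (hφ : φ.Nonsingular) :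
    Hyperbolic (φ.map (toFunctionField (F := F) q)) ↔
      ∃ ψ τ : QF F, ψ.Nonsingular ∧ Hyperbolic (ψ.map (algebraMap F K)) ∧ τ.Nonsingular ∧
        WittEquiv φ (ψ.orthSum (pfTensor l τ)) := by
  have : CharP K 2 := ((algebraMap F K).charP_iff (RingHom.injective _) 2).1 inferInstance
  have hne' : l.map (algebraMap F K) ≠ [] := by simpa using hne
  rw [map_pfTensor, QF.map_unit] at hB
  refine hyperbolic_map_comp_iff_exists_wittEquiv (g := toFunctionField (F := K) q) hK hl
    hB.anisotropic (fun _ => hB.exists_linearMap_of_hasLagrangian_functionField hq hne')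
    (fun τ => ?_) hφ
  have hlag := hB.hasLagrangian_map_pfTensor hq hne' (τ.map (algebraMap F K))
  rwa [← map_pfTensor] at hlag

end WittKernel

end QF

open QF in
theorem wittKernel_functionField_bilinear_pfister_general
    {F K : Type*} [Field F] [Field K] [Algebra F K] [CharP F 2]
    (hK : ∀ x : K, ∃ y : F, algebraMap F K y = x ^ 2) (l : List F) (hl : ∀ a ∈ l, a ≠ 0)
    (q : QF K) (hq : q.TotallySingular)
    (hB0 : AnisoPartOf ((pfTensor l unit).map (algebraMap F K)) q) [IsDomain (CoordRing q)] :
    (l = [] → ∀ φ : QF F, φ.Nonsingular →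
      (Hyperbolic (φ.map (toFunctionField (F := F) q)) ↔ Hyperbolic (φ.map (algebraMap F K)))) ∧
    (l ≠ [] → ∀ φ : QF F, φ.Nonsingular →
      (Hyperbolic (φ.map (toFunctionField (F := F) q)) ↔
        ∃ ψ τ : QF F, ψ.Nonsingular ∧ Hyperbolic (ψ.map (algebraMap F K)) ∧ τ.Nonsingular ∧
          WittEquiv φ (ψ.orthSum (pfTensor l τ)))) := by
  refine ⟨?_, fun hne _ hφ =>
    hyperbolic_map_toFunctionField_iff_of_anisoPartOf_pfTensor hK hl hne hq hB0 hφ⟩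
  rintro rfl φ hφ
  rw [map_pfTensor, QF.map_unit] at hB0
  exact hyperbolic_map_toFunctionField_iff_of_anisoPartOf_unit hK hq hB0 hφ

open QF in
/-- Let `F` have characteristic 2, `K/F` purely inseparable of
exponent 1 (`K² ⊆ F`), `B = ⟨⟨a₁,…,aₙ⟩⟩_b` (`n ≥ 1`, `aᵢ ∈ F*`) a bilinear Pfister form
with associated totally singular quadratic form `q = ⟨⟨a₁,…,aₙ⟩⟩`, and let
`i₁ < … < i_k` (a strictly monotone `f : Fin k → Fin n`) be such that
`(q_K)_an ≅ (⟨⟨a_{i₁},…,a_{i_k}⟩⟩)_K`; put `B₀ = ⟨⟨a_{i₁},…,a_{i_k}⟩⟩_b` (of dimension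
`2^k`).  Let `L = K(B)` be the function field over `K` of the quadric `q = 0`.
If `dim B₀ = 1` (i.e. `k = 0`) then `W_q(L/F) = W_q(K/F)`; if `dim B₀ > 1`
(i.e. `k ≥ 1`) then `W_q(L/F) = W_q(K/F) + B₀ ⊗ W_q(F)`. -/
theorem wittKernel_functionField_bilinear_pfister
    (F K : Type*) [Field F] [Field K] [Algebra F K] [CharP F 2]
    (hK : ∀ x : K, ∃ y : F, algebraMap F K y = x ^ 2)
    (n : ℕ) (hn : 1 ≤ n) (a : Fin n → F) (ha : ∀ i, a i ≠ 0)
    (k : ℕ) (f : Fin k → Fin n) (hf : StrictMono f)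
    (hB0 : AnisoPartOf ((pfTensor (List.ofFn (a ∘ f)) unit).map (algebraMap F K))
      ((pfTensor (List.ofFn a) unit).map (algebraMap F K)))
    [IsDomain (CoordRing ((pfTensor (List.ofFn a) unit).map (algebraMap F K)))] :
    (k = 0 → ∀ φ : QF F, φ.Nonsingular →
      (Hyperbolic (φ.map (toFunctionField (F := F)
          ((pfTensor (List.ofFn a) unit).map (algebraMap F K)))) ↔
        Hyperbolic (φ.map (algebraMap F K)))) ∧
    (1 ≤ k → ∀ φ : QF F, φ.Nonsingular →
      (Hyperbolic (φ.map (toFunctionField (F := F)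
          ((pfTensor (List.ofFn a) unit).map (algebraMap F K)))) ↔
        ∃ ψ τ : QF F, ψ.Nonsingular ∧ Hyperbolic (ψ.map (algebraMap F K)) ∧
          τ.Nonsingular ∧
          WittEquiv φ (ψ.orthSum (pfTensor (List.ofFn (a ∘ f)) τ)))) := by
  have hq : ((pfTensor (List.ofFn a) unit).map (algebraMap F K)).TotallySingular :=
    ((totallySingular_diag _).pfTensor _).map _
  have hl : ∀ b ∈ List.ofFn (a ∘ f), b ≠ 0 := by simpa [List.mem_ofFn] using fun i => ha (f i)
  simpa [List.ofFn_eq_nil_iff, Nat.one_le_iff_ne_zero] using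
    wittKernel_functionField_bilinear_pfister_general hK _ hl _ hq hB0
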